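/- There exists an absolute constant C ≥ 1 such that for every odd prime p, every multiplicative subgroup Γ of F_p^*, every Γ-invariant real function f on F_p which is not identically zero and satisfies ∑_{x∈F_p} f(x) = 0, and every integer k ≥ 2, at least one of the following two inequalities holds: E⁺_{2^{k+1}}(f) ≤ C·(1 + log(‖f‖₁/‖f‖₂)) · ‖f‖₂^{2^{k+1}} · E⁺_{2^k}(f) · |Γ|^{−1/8}, or E⁺_{2^{k+1}}(f) ≤ 2·‖f‖₂^{2^{k+2}}. -/

import Mathlib

open Finset

/-- `(f∘f)(x) = ∑_y f(y)·f(y+x)`. -/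
noncomputable def corr (p : ℕ) [NeZero p] (f : ZMod p → ℝ) (x : ZMod p) : ℝ :=
  ∑ y, f y * f (y + x)

/-- `E⁺_m(f) = ∑_x ((f∘f)(x))^m`. -/
noncomputable def EplusF (p : ℕ) [NeZero p] (m : ℕ) (f : ZMod p → ℝ) : ℝ :=
  ∑ x, (corr p f x) ^ m

/-- `‖f‖₁ = ∑_x |f(x)|`. -/
noncomputable def l1norm (p : ℕ) [NeZero p] (f : ZMod p → ℝ) : ℝ :=
  ∑ x, |f x|

/-- `‖f‖₂ = (∑_x f(x)²)^{1/2}`. -/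
noncomputable def l2norm (p : ℕ) [NeZero p] (f : ZMod p → ℝ) : ℝ :=
  Real.sqrt (∑ x, (f x) ^ 2)

/-!
Normalise `‖f‖₂ = 1` and write `c = f∘f`, `φ = c ^ m`. Since `φ` is positive definite, two
applications of the Cauchy–Schwarz inequality bound its sum over a set `Q` by
`(∑_Q φ)⁸ ≤ (∑ φ)² (∑ φ²) ∑_t h_Q(t)⁴`, where `h_Q(t)` counts the representations of `t` as a
difference in `Q`. This is applied to the dyadic level set `Q` of `φ` that contributes most to
`∑ φ²`; finding it by pigeonhole costs the logarithm.

Such a level set is `Γ`-invariant, and then `∑ h_Q⁴ ≪ |Q|⁵ / |Γ|^{1/2}`. To see this, count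
incidences between points `(s, t, u)` of `F³` and the rays `{s + m t = a, t + m u = b}` with
`m ∈ Γ` and `a, b ∈ Q`. Their directions `(m², -m, 1)` lie on a conic, so the rays through a point
span a quadratic cone. Take a nonzero polynomial `P` of low degree vanishing on all the rays. At a
point lying on `r` rays, its restriction to the cone vanishes to order `r / 2`. Differentiating
along the cone, one obtains on every ray a pencil `G - τ B` of polynomials whose member `τ` has
high multiplicity at `τ`. The Wronskian of `B` and `G` then has too many zeros, so `B = G = 0`, and
hence all partial derivatives of `P` vanish on the rays as well. Descending on the degree gives
`P = 0`, so there cannot be many rich points.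
-/

section Univariate

open Polynomial

variable {F : Type*} [Field F]

theorem eq_zero_of_forall_X_sub_C_pow_dvd {V : F[X]} {S : Finset F} {e : F → ℕ}
    (hdvd : ∀ τ ∈ S, (X - C τ) ^ e τ ∣ V) (hdeg : V.natDegree < ∑ τ ∈ S, e τ) : V = 0 := by
  have hprod : (∏ τ ∈ S, (X - C τ) ^ e τ) ∣ V :=
    Finset.prod_dvd_of_coprime
      (fun _ _ _ _ hne => (pairwise_coprime_X_sub_C Function.injective_id hne).pow) hdvd
  refine eq_zero_of_dvd_of_natDegree_lt hprod ?_
  rwa [natDegree_prod_of_monic _ _ fun τ _ => (monic_X_sub_C τ).pow _,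
    sum_congr rfl fun τ _ => by rw [natDegree_pow, natDegree_X_sub_C, mul_one]]

theorem coeff_X_mul_derivative {R : Type*} [CommSemiring R] (P : R[X]) (i : ℕ) :
    (X * derivative P).coeff i = i * P.coeff i := by
  cases i with
  | zero => simp
  | succ i => rw [coeff_X_mul, coeff_derivative, mul_comm, Nat.cast_succ]

theorem natDegree_eq_of_wronskian_eq_zero {p : ℕ} [CharP F p] {B G : F[X]} (hB : B ≠ 0)
    (hG : G ≠ 0) (hW : wronskian B G = 0) (hBp : B.natDegree < p) (hGp : G.natDegree < p) :
    B.natDegree = G.natDegree := by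
  have hle : ∀ P : F[X], (X * derivative P).natDegree ≤ P.natDegree := fun P =>
    natDegree_le_iff_coeff_eq_zero.mpr fun i hi => by
      rw [coeff_X_mul_derivative, coeff_eq_zero_of_natDegree_lt hi, mul_zero]
  have heq : B * (X * derivative G) = X * derivative B * G := by
    rw [wronskian] at hW
    linear_combination X * hW
  have hcoeff := congrArg (fun P => P.coeff (B.natDegree + G.natDegree)) heq
  simp only [coeff_mul_add_eq_of_natDegree_le le_rfl (hle _),
    coeff_mul_add_eq_of_natDegree_le (hle _) le_rfl, coeff_X_mul_derivative,
    coeff_natDegree] at hcoeff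
  have hlead : B.leadingCoeff * G.leadingCoeff ≠ 0 :=
    mul_ne_zero (leadingCoeff_ne_zero.mpr hB) (leadingCoeff_ne_zero.mpr hG)
  refine CharP.natCast_injOn_Iio F p hBp hGp (mul_right_cancel₀ hlead ?_)
  linear_combination -hcoeff

theorem exists_eq_C_mul_of_wronskian_eq_zero {p : ℕ} [CharP F p] {B G : F[X]} (hB : B ≠ 0)
    (hW : wronskian B G = 0) (hBp : B.natDegree < p) (hGp : G.natDegree < p) :
    ∃ c, G = C c * B := by
  set c := G.coeff B.natDegree / B.leadingCoeff with hc
  refine ⟨c, sub_eq_zero.mp (by_contra fun hne => ?_)⟩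
  have hW' : wronskian B (G - C c * B) = 0 := by
    rw [wronskian] at hW ⊢
    rw [derivative_sub, derivative_C_mul]
    linear_combination hW
  have hle : (G - C c * B).natDegree < p :=
    (natDegree_sub_le _ _).trans_lt (max_lt hGp ((natDegree_C_mul_le _ _).trans_lt hBp))
  have hdeg := natDegree_eq_of_wronskian_eq_zero hB hne hW' hBp hle
  refine leadingCoeff_ne_zero.mpr hne ?_
  rw [leadingCoeff, ← hdeg, coeff_sub, coeff_C_mul, coeff_natDegree, hc,
    div_mul_cancel₀ _ (leadingCoeff_ne_zero.mpr hB), sub_self]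

-- The Wronskian of `B` and `G` is also that of `B` and any member of the pencil `G - τ B`, so it
-- inherits a zero at every `τ`; once it vanishes, `G = c B` and the members themselves kill `B`.
theorem eq_zero_of_forall_pow_dvd_sub_C_mul [Fintype F] {p : ℕ} [CharP F p] {B G : F[X]}
    {N n : ℕ} {e : F → ℕ} (hB : B.natDegree ≤ N) (hG : G.natDegree ≤ N) (hNp : N < p)
    (he : ∀ τ, e τ ≤ n) (hdvd : ∀ τ, (X - C τ) ^ e τ ∣ G - C τ * B)
    (hsum : 2 * N + n < ∑ τ, (e τ - 1)) : B = 0 ∧ G = 0 := by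
  classical
  have hsum' : ∑ τ, (e τ - 1) ≤ ∑ τ, e τ := sum_le_sum fun τ _ => Nat.sub_le _ _
  have hW : wronskian B G = 0 := by
    have hdvdW : ∀ τ ∈ univ, (X - C τ) ^ (e τ - 1) ∣ wronskian B G := fun τ _ => by
      have hpencil : wronskian B G =
          B * derivative (G - C τ * B) - derivative B * (G - C τ * B) := by
        rw [wronskian, derivative_sub, derivative_C_mul]
        ring
      rw [hpencil]
      exact dvd_sub ((pow_sub_one_dvd_derivative_of_pow_dvd (hdvd τ)).mul_left _)
        (((pow_dvd_pow _ (Nat.sub_le _ _)).trans (hdvd τ)).mul_left _)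
    by_contra hW
    have := natDegree_wronskian_lt_add hW
    exact hW (eq_zero_of_forall_X_sub_C_pow_dvd hdvdW (by omega))
  have hB0 : B = 0 := by
    by_contra hB0
    obtain ⟨c, rfl⟩ := exists_eq_C_mul_of_wronskian_eq_zero hB0 hW (hB.trans_lt hNp)
      (hG.trans_lt hNp)
    refine hB0 (eq_zero_of_forall_X_sub_C_pow_dvd (S := univ.erase c) (e := e) (fun τ hτ => ?_) ?_)
    · have hunit : IsUnit (C (c - τ)) :=
        isUnit_C.mpr (sub_ne_zero.mpr (ne_of_mem_erase hτ).symm).isUnit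
      rw [← hunit.dvd_mul_left, C_sub, sub_mul]
      exact hdvd τ
    · have := add_sum_erase univ e (mem_univ c)
      have := he c
      omega
  refine ⟨hB0, eq_zero_of_forall_X_sub_C_pow_dvd (S := univ) (e := e) (fun τ _ => ?_) (by omega)⟩
  simpa [hB0] using hdvd τ

end Univariate

section Multivariate

open Polynomial

variable {σ F : Type*} [Field F]

theorem derivative_aeval_mvPolynomial [Fintype σ] {A R : Type*} [CommSemiring A] [CommSemiring R]
    [Algebra A R] (g : σ → R[X]) (P : MvPolynomial σ A) :
    derivative (MvPolynomial.aeval g P) =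
      ∑ i, MvPolynomial.aeval g (MvPolynomial.pderiv i P) * derivative (g i) := by
  classical
  induction P using MvPolynomial.induction_on with
  | C a => simp
  | add q r hq hr => simp only [map_add, hq, hr, add_mul, sum_add_distrib]
  | mul_X q j hq =>
    have hsingle : ∑ i, MvPolynomial.aeval g (q * MvPolynomial.pderiv i (MvPolynomial.X j)) *
        derivative (g i) = MvPolynomial.aeval g q * derivative (g j) := by
      rw [sum_eq_single_of_mem j (mem_univ j), MvPolynomial.pderiv_X_self, mul_one]
      intro i _ hij
      rw [MvPolynomial.pderiv_X_of_ne hij.symm, mul_zero, map_zero, zero_mul]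
    simp only [MvPolynomial.pderiv_mul, map_add, map_mul, MvPolynomial.aeval_X, derivative_mul, hq,
      add_mul, sum_add_distrib, sum_mul] at hsingle ⊢
    rw [hsingle]
    exact congrArg (· + _) (sum_congr rfl fun i _ => by ring)

theorem totalDegree_pderiv_le {R : Type*} [CommSemiring R] (i : σ) (P : MvPolynomial σ R) :
    (MvPolynomial.pderiv i P).totalDegree ≤ P.totalDegree - 1 := by
  refine Finset.sup_le fun d hd => Nat.le_sub_one_of_lt ?_
  rw [MvPolynomial.mem_support_iff, MvPolynomial.coeff_pderiv] at hd
  have hle := MvPolynomial.le_totalDegree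
    (MvPolynomial.mem_support_iff.mpr (left_ne_zero_of_mul hd))
  rw [Finsupp.sum_add_index' (by simp) (by simp)] at hle
  simpa using hle

theorem eq_C_of_forall_pderiv_eq_zero {p : ℕ} [CharP F p] {P : MvPolynomial σ F}
    (hderiv : ∀ i, MvPolynomial.pderiv i P = 0) (hdeg : P.totalDegree < p) :
    P = MvPolynomial.C (P.coeff 0) := by
  refine MvPolynomial.totalDegree_eq_zero_iff_eq_C.mp
    ((MvPolynomial.totalDegree_eq_zero_iff _ _).mpr fun e he i => ?_)
  by_contra hi
  have hei : e i < p :=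
    ((Finsupp.le_degree i e).trans (MvPolynomial.le_totalDegree he)).trans_lt hdeg
  have hcoeff := congrArg (MvPolynomial.coeff (e - Finsupp.single i 1)) (hderiv i)
  rw [MvPolynomial.coeff_pderiv, MvPolynomial.coeff_zero,
    tsub_add_cancel_of_le (Finsupp.single_le_iff.mpr (Nat.one_le_iff_ne_zero.mpr hi))] at hcoeff
  have hcast := (mul_eq_zero.mp hcoeff).resolve_left (MvPolynomial.mem_support_iff.mp he)
  rw [Finsupp.tsub_apply, Finsupp.single_eq_same, ← Nat.cast_succ, Nat.succ_eq_add_one,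
    Nat.sub_add_cancel (Nat.one_le_iff_ne_zero.mpr hi), CharP.cast_eq_zero_iff F p] at hcast
  exact hi (Nat.eq_zero_of_dvd_of_lt hcast hei)

theorem finrank_restrictDegree [Fintype σ] (d : ℕ) :
    Module.finrank F (MvPolynomial.restrictDegree σ F d) = (d + 1) ^ Fintype.card σ := by
  have hexp : {e : σ →₀ ℕ // ∀ i, e i ≤ d} ≃ (σ → Set.Iic d) :=
    (Finsupp.equivFunOnFinite.subtypeEquiv fun _ => Iff.rfl).trans
      (Equiv.subtypePiEquivPi (p := fun _ => (· ≤ d)))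
  rw [MvPolynomial.restrictDegree,
    Module.finrank_eq_nat_card_basis (MvPolynomial.basisRestrictSupport F _)]
  refine (Nat.card_congr hexp).trans ?_
  rw [Nat.card_fun, Nat.card_eq_fintype_card, Nat.card_eq_fintype_card, Fintype.card_Iic,
    Nat.card_Iic]

theorem totalDegree_le_of_mem_restrictDegree [Fintype σ] {R : Type*} [CommSemiring R] {d : ℕ}
    {P : MvPolynomial σ R} (hP : P ∈ MvPolynomial.restrictDegree σ R d) :
    P.totalDegree ≤ Fintype.card σ * d := by
  rw [MvPolynomial.mem_restrictDegree] at hP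
  refine Finset.sup_le fun e he => ?_
  rw [Finsupp.sum_fintype _ _ fun _ => rfl, ← smul_eq_mul]
  exact sum_le_card_nsmul _ _ _ fun i _ => hP e he i

theorem exists_ne_zero_forall_aeval_eq_zero [Fintype σ] {ι : Type*} [Fintype ι] {ℓ : ι → σ → F[X]}
    {d : ℕ} (hℓ : ∀ r i, (ℓ r i).natDegree ≤ 1)
    (hcard : Fintype.card ι * (Fintype.card σ * d + 1) < (d + 1) ^ Fintype.card σ) :
    ∃ P : MvPolynomial σ F, P ≠ 0 ∧ P.totalDegree ≤ Fintype.card σ * d ∧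
      ∀ r, MvPolynomial.aeval (ℓ r) P = 0 := by
  set N := Fintype.card σ * d
  let coeffs : MvPolynomial.restrictDegree σ F d →ₗ[F] (ι × Fin (N + 1) → F) :=
    LinearMap.pi fun rj => lcoeff F rj.2 ∘ₗ
      (MvPolynomial.aeval (ℓ rj.1)).toLinearMap ∘ₗ Submodule.subtype _
  have hker : LinearMap.ker coeffs ≠ ⊥ := by
    have : Module.Finite F (MvPolynomial.restrictDegree σ F d) :=
      Module.finite_of_finrank_pos (by rw [finrank_restrictDegree]; positivity)
    refine LinearMap.ker_ne_bot_of_finrank_lt ?_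
    rwa [Module.finrank_fintype_fun_eq_card, finrank_restrictDegree, Fintype.card_prod,
      Fintype.card_fin]
  obtain ⟨⟨P, hPmem⟩, hPker, hP0⟩ := (Submodule.ne_bot_iff _).mp hker
  have hdeg : P.totalDegree ≤ N := totalDegree_le_of_mem_restrictDegree hPmem
  refine ⟨P, fun h => hP0 (Subtype.ext h), hdeg, fun r => Polynomial.ext fun j => ?_⟩
  rcases le_or_gt j N with hj | hj
  · exact congrFun (LinearMap.mem_ker.mp hPker) (r, ⟨j, Nat.lt_succ_of_le hj⟩)
  · have := MvPolynomial.aeval_natDegree_le P hdeg (ℓ r) (hℓ r)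
    rw [coeff_zero, coeff_eq_zero_of_natDegree_lt (by omega)]

end Multivariate

section Cone

open Polynomial
open MvPolynomial (pderiv)

theorem natDegree_coeff_aeval_le {σ R : Type*} [CommSemiring R] {g : σ → R[X][X]} {w : ℕ}
    (hg : ∀ i j, ((g i).coeff j).natDegree ≤ w * j) (P : MvPolynomial σ R) (j : ℕ) :
    ((MvPolynomial.aeval g P).coeff j).natDegree ≤ w * j := by
  induction P using MvPolynomial.induction_on generalizing j with
  | C a =>
    rw [MvPolynomial.aeval_C, Polynomial.algebraMap_apply, Polynomial.algebraMap_apply, coeff_C]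
    split_ifs <;> simp
  | add q r hq hr =>
    rw [map_add, coeff_add]
    exact natDegree_add_le_of_degree_le (hq j) (hr j)
  | mul_X q i hq =>
    rw [map_mul, MvPolynomial.aeval_X, coeff_mul]
    refine natDegree_sum_le_of_forall_le _ _ fun ab hab => ?_
    rw [← mem_antidiagonal.mp hab, mul_add]
    exact natDegree_mul_le_of_le (hq _) (hg _ _)

theorem map_evalRingHom_swap {R : Type*} [CommRing R] (m : R) (q : R[X][X]) :
    (Bivariate.swap q).map (evalRingHom m) = q.eval (C m) := by
  suffices h : (mapRingHom (evalRingHom m)).comp (Bivariate.swap (R := R)).toRingHom =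
      evalRingHom (C m) from
    DFunLike.congr_fun h q
  ext <;> simp [Bivariate.swap_C_C, Bivariate.swap_X, Bivariate.swap_Y]

variable {F : Type*} [Field F]

-- Each coefficient in the inner variable is a polynomial of low degree vanishing on `M`.
theorem C_X_pow_dvd_of_forall_eval_C_eq_zero {q : F[X][X]} {w : ℕ} (hw : 0 < w)
    (hq : ∀ j, ((Bivariate.swap q).coeff j).natDegree ≤ w * j) {M : Finset F}
    (hM : ∀ m ∈ M, q.eval (C m) = 0) : C (X ^ (#M / w)) ∣ q := by
  have hswap : X ^ (#M / w) ∣ Bivariate.swap q := by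
    refine X_pow_dvd_iff.mpr fun j hj => ?_
    refine eq_zero_of_natDegree_lt_card_of_eval_eq_zero' _ M (fun m hm => ?_) ?_
    · have hmap := hM m hm
      rw [← map_evalRingHom_swap] at hmap
      simpa only [coeff_map, coe_evalRingHom, coeff_zero] using congrArg (fun P => P.coeff j) hmap
    · exact (hq j).trans_lt ((Nat.mul_lt_mul_of_pos_left hj hw).trans_le (Nat.mul_div_le _ _))
  simpa [Bivariate.swap_Y, Bivariate.swap_swap_apply] using _root_.map_dvd Bivariate.swap hswap

/-- The ray `r = (m, a, b)`, that is, the line `{(s, t, u) | s + m t = a, t + m u = b}` of `F³`,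
parametrised by its last coordinate. -/
noncomputable def rayParam (r : F × F × F) : Fin 3 → F[X] :=
  ![C (r.2.1 - r.1 * r.2.2) + C (r.1 ^ 2) * X, C r.2.2 - C r.1 * X, X]

/-- Restriction of a polynomial on `F³` to the ray `r`. -/
noncomputable def rayRestrict (r : F × F × F) : MvPolynomial (Fin 3) F →ₐ[F] F[X] :=
  MvPolynomial.aeval (rayParam r)

/-- Restriction of a polynomial on `F³` to the quadratic cone `(s, t, u) + z (m², -m, 1)` formed by
the rays through `(s, t, u)`. The outer variable is the slope `m`, the inner one is `z`. -/
noncomputable def coneRestrict (x : F × F × F) : MvPolynomial (Fin 3) F →ₐ[F] F[X][X] :=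
  MvPolynomial.aeval ![C (C x.1) + C X * X ^ 2, C (C x.2.1) - C X * X, C (C x.2.2 + X)]

/-- The ray of slope `m` through the point `x`. -/
def rayThrough (x : F × F × F) (m : F) : F × F × F :=
  (m, x.1 + m * x.2.1, x.2.1 + m * x.2.2)

/-- Differentiation along `(2m, -1, 0)`, the tangent of the conic `m ↦ (m², -m, 1)`. -/
noncomputable def conicDeriv (m : F) :
    Derivation F (MvPolynomial (Fin 3) F) (MvPolynomial (Fin 3) F) :=
  (2 * m) • pderiv 0 - pderiv 1

theorem conicDeriv_apply (m : F) (P : MvPolynomial (Fin 3) F) :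
    conicDeriv m P = (2 * m) • pderiv 0 P - pderiv 1 P := rfl

theorem rayRestrict_rayThrough (x : F × F × F) (m : F) (P : MvPolynomial (Fin 3) F) :
    rayRestrict (rayThrough x m) P =
      ((coneRestrict x P).eval (C m)).comp (X - C x.2.2) := by
  suffices h : rayRestrict (rayThrough x m) =
      (aeval (X - C x.2.2 : F[X])).comp
        (((aeval (C m : F[X])).restrictScalars F).comp (coneRestrict x)) from
    DFunLike.congr_fun h P
  refine MvPolynomial.algHom_ext fun i => ?_
  fin_cases i <;> simp [rayRestrict, rayParam, coneRestrict, rayThrough] <;> ring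

theorem natDegree_coeff_swap_coneRestrict_le (x : F × F × F) (P : MvPolynomial (Fin 3) F) (j : ℕ) :
    ((Bivariate.swap (coneRestrict x P)).coeff j).natDegree ≤ 2 * j := by
  have hswap : Bivariate.swap (coneRestrict x P) = MvPolynomial.aeval
      ![C (C x.1) + C (X ^ 2) * X, C (C x.2.1) - C X * X, C (C x.2.2) + X] P := by
    suffices h : (Bivariate.swap.toAlgHom).comp (coneRestrict x) = MvPolynomial.aeval
        ![C (C x.1) + C (X ^ 2) * X, C (C x.2.1) - C X * X, C (C x.2.2) + X] from
      DFunLike.congr_fun h P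
    refine MvPolynomial.algHom_ext fun i => ?_
    fin_cases i <;>
      simp [coneRestrict, Bivariate.swap_C_C, Bivariate.swap_X, Bivariate.swap_Y, X_mul]
  rw [hswap]
  refine natDegree_coeff_aeval_le (fun i j => ?_) P j
  have hC : ∀ c : F, ((C (C c) : F[X][X]).coeff j).natDegree ≤ 2 * j := fun c => by
    rw [coeff_C]
    split_ifs <;> simp
  have hX : ∀ q : F[X], q.natDegree ≤ 2 → ((C q * X).coeff j).natDegree ≤ 2 * j := by
    intro q hq
    rw [coeff_C_mul, coeff_X]
    split_ifs with hj
    · rw [mul_one]; omega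
    · simp
  fin_cases i
  · exact natDegree_add_le_of_degree_le (hC _) (hX _ (natDegree_X_pow_le 2))
  · exact (natDegree_sub_le_of_le (hC _) (hX _ (natDegree_X_le.trans one_le_two))).trans
      (max_self _).le
  · simpa using natDegree_add_le_of_degree_le (hC x.2.2) (hX 1 (by simp))

theorem C_X_pow_dvd_coneRestrict {x : F × F × F} {P : MvPolynomial (Fin 3) F} {M : Finset F}
    (hM : ∀ m ∈ M, rayRestrict (rayThrough x m) P = 0) :
    C (X ^ (#M / 2)) ∣ coneRestrict x P := by
  refine C_X_pow_dvd_of_forall_eval_C_eq_zero two_pos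
    (natDegree_coeff_swap_coneRestrict_le x P) fun m hm => ?_
  have hray := hM m hm
  rw [rayRestrict_rayThrough] at hray
  rwa [sub_eq_add_neg, ← C_neg, comp_X_add_C_eq_zero_iff] at hray

theorem derivative_coneRestrict (x : F × F × F) (P : MvPolynomial (Fin 3) F) :
    derivative (coneRestrict x P) =
      C X * (2 * X * coneRestrict x (pderiv 0 P) - coneRestrict x (pderiv 1 P)) := by
  rw [coneRestrict, derivative_aeval_mvPolynomial, Fin.sum_univ_three]
  simp only [Matrix.cons_val, derivative_add, derivative_sub, derivative_mul, derivative_X_pow,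
    derivative_C, derivative_X, Nat.cast_ofNat, map_ofNat C]
  ring

theorem eval_coneRestrict_conicDeriv (x : F × F × F) (m : F) (P : MvPolynomial (Fin 3) F) :
    (coneRestrict x (conicDeriv m P)).eval (C m) =
      (2 * X * coneRestrict x (pderiv 0 P) - coneRestrict x (pderiv 1 P)).eval (C m) := by
  simp only [conicDeriv_apply, map_sub, map_smul, eval_sub, eval_smul, eval_mul, eval_ofNat, eval_X,
    smul_eq_C_mul, C_mul, map_ofNat C]

theorem eval_derivative_coneRestrict (x : F × F × F) (m : F) (P : MvPolynomial (Fin 3) F) :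
    (derivative (coneRestrict x P)).eval (C m) =
      X * (coneRestrict x (conicDeriv m P)).eval (C m) := by
  rw [derivative_coneRestrict, eval_mul, eval_C, eval_coneRestrict_conicDeriv]

theorem X_sub_C_pow_dvd_rayRestrict_conicDeriv {x : F × F × F} {P : MvPolynomial (Fin 3) F} {k : ℕ}
    (hk : C (X ^ (k + 1)) ∣ coneRestrict x P) (m : F) :
    (X - C x.2.2) ^ k ∣ rayRestrict (rayThrough x m) (conicDeriv m P) ∧
    (X - C x.2.2) ^ k ∣ 2 * rayRestrict (rayThrough x m) (pderiv 0 P) +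
      (X - C x.2.2) * rayRestrict (rayThrough x m) (conicDeriv m (conicDeriv m P)) := by
  set V := 2 * X * coneRestrict x (pderiv 0 P) - coneRestrict x (pderiv 1 P) with hV
  have dvd_derivative : ∀ {j} {q : F[X][X]}, C (X ^ j) ∣ q → C (X ^ j) ∣ derivative q := by
    rintro j _ ⟨Z, rfl⟩
    exact ⟨derivative Z, derivative_C_mul _ _⟩
  have dvd_ray : ∀ {q : F[X][X]}, C (X ^ k) ∣ q →
      (X - C x.2.2) ^ k ∣ (q.eval (C m)).comp (X - C x.2.2) := by
    rintro _ ⟨Z, rfl⟩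
    exact ⟨(Z.eval (C m)).comp (X - C x.2.2), by rw [eval_mul, eval_C, mul_comp, X_pow_comp]⟩
  have hdvd : C (X ^ k) ∣ V := by
    refine (mul_dvd_mul_iff_left (C_ne_zero.mpr (X_ne_zero (R := F)))).mp ?_
    rw [← derivative_coneRestrict, ← C_mul, ← pow_succ']
    exact dvd_derivative hk
  have hderiv : (derivative V).eval (C m) = 2 * (coneRestrict x (pderiv 0 P)).eval (C m) +
      X * (coneRestrict x (conicDeriv m (conicDeriv m P))).eval (C m) := by
    simp only [hV, derivative_sub, derivative_mul, derivative_X, derivative_ofNat, eval_sub,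
      eval_add, eval_mul, eval_X, eval_derivative_coneRestrict, eval_coneRestrict_conicDeriv]
    simp only [conicDeriv_apply, map_sub, Derivation.map_smul, map_smul, eval_zero, eval_one,
      eval_ofNat, eval_sub, eval_smul, smul_eq_C_mul, C_mul, map_ofNat C]
    ring
  simp only [rayRestrict_rayThrough]
  constructor
  · rw [eval_coneRestrict_conicDeriv]
    exact dvd_ray hdvd
  · simpa only [hderiv, add_comp, mul_comp, X_comp, ofNat_comp, Nat.cast_ofNat] using
      dvd_ray (dvd_derivative hdvd)

end Cone

section Descent

open Polynomial
open MvPolynomial (pderiv)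

variable {F : Type*} [Field F]

theorem natDegree_rayParam_le_one (r : F × F × F) (i : Fin 3) : (rayParam r i).natDegree ≤ 1 := by
  have hconst : ∀ c : F, (C c).natDegree ≤ 1 := fun c => (natDegree_C c).le.trans zero_le_one
  have hlinear : ∀ c : F, (C c * X).natDegree ≤ 1 := fun c =>
    (natDegree_C_mul_le c X).trans natDegree_X_le
  fin_cases i
  · exact natDegree_add_le_of_degree_le (hconst _) (hlinear _)
  · exact (natDegree_sub_le_of_le (hconst _) (hlinear _)).trans (max_self 1).le
  · exact natDegree_X_le

theorem natDegree_rayRestrict_le (r : F × F × F) (P : MvPolynomial (Fin 3) F) :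
    (rayRestrict r P).natDegree ≤ P.totalDegree :=
  (MvPolynomial.aeval_natDegree_le P le_rfl _ (natDegree_rayParam_le_one r)).trans (mul_one _).le

theorem exists_ne_zero_forall_rayRestrict_eq_zero {L : Finset (F × F × F)} {d : ℕ}
    (hd : 3 * #L < (d + 1) ^ 2) :
    ∃ P : MvPolynomial (Fin 3) F, P ≠ 0 ∧ P.totalDegree ≤ 3 * d ∧
      ∀ r ∈ L, rayRestrict r P = 0 := by
  obtain ⟨P, hP0, hdeg, hP⟩ := exists_ne_zero_forall_aeval_eq_zero (ι := L) (d := d)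
    (fun r => natDegree_rayParam_le_one r.1) (by
      rw [Fintype.card_coe, Fintype.card_fin, pow_succ (d + 1)]
      nlinarith)
  exact ⟨P, hP0, by rwa [Fintype.card_fin] at hdeg, fun r hr => hP ⟨r, hr⟩⟩

theorem totalDegree_conicDeriv_le (m : F) (P : MvPolynomial (Fin 3) F) :
    (conicDeriv m P).totalDegree ≤ P.totalDegree := by
  have hpderiv : ∀ i, (pderiv i P).totalDegree ≤ P.totalDegree := fun i =>
    (totalDegree_pderiv_le i P).trans (Nat.sub_le _ _)
  rw [conicDeriv_apply]
  exact (MvPolynomial.totalDegree_sub _ _).trans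
    (max_le ((MvPolynomial.totalDegree_smul_le _ _).trans (hpderiv 0)) (hpderiv 1))

theorem rayRestrict_pderiv_zero_eq_zero [Fintype F] {p : ℕ} [CharP F p] {r : F × F × F}
    {P : MvPolynomial (Fin 3) F} {D n : ℕ} {e : F → ℕ} (hdeg : P.totalDegree ≤ D)
    (hD : D + 2 < p) (he : ∀ τ, e τ ≤ n)
    (hdvd : ∀ τ, (X - C τ) ^ e τ ∣ 2 * rayRestrict r (pderiv 0 P) +
      (X - C τ) * rayRestrict r (conicDeriv r.1 (conicDeriv r.1 P)))
    (hsum : 2 * (D + 1) + n < ∑ τ, (e τ - 1)) : rayRestrict r (pderiv 0 P) = 0 := by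
  set A := rayRestrict r (pderiv 0 P)
  set B := rayRestrict r (conicDeriv r.1 (conicDeriv r.1 P))
  have hA : A.natDegree ≤ D := (natDegree_rayRestrict_le r _).trans
    (((totalDegree_pderiv_le 0 P).trans (Nat.sub_le _ _)).trans hdeg)
  have hB : B.natDegree ≤ D := (natDegree_rayRestrict_le r _).trans
    (((totalDegree_conicDeriv_le _ _).trans (totalDegree_conicDeriv_le _ _)).trans hdeg)
  have hAB : (2 * A + X * B).natDegree ≤ D + 1 := by
    refine natDegree_add_le_of_degree_le ?_ ?_
    · rw [two_mul]
      exact (natDegree_add_le_of_degree_le hA hA).trans D.le_succ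
    · exact natDegree_mul_le.trans (by rw [natDegree_X]; omega)
  obtain ⟨hB0, hAB0⟩ : B = 0 ∧ 2 * A + X * B = 0 :=
    eq_zero_of_forall_pow_dvd_sub_C_mul (p := p) (hB.trans D.le_succ) hAB (by omega) he
      (fun τ => by convert hdvd τ using 1; ring) hsum
  have htwo : (2 : F) ≠ 0 := by
    exact_mod_cast (CharP.cast_eq_zero_iff F p 2).not.mpr
      (Nat.not_dvd_of_pos_of_lt two_pos (by omega))
  rw [hB0, mul_zero, add_zero, ← map_ofNat C] at hAB0
  exact (mul_eq_zero.mp hAB0).resolve_left (C_ne_zero.mpr htwo)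

theorem rayRestrict_pderiv_eq_zero [Fintype F] {p : ℕ} [CharP F p] {r : F × F × F}
    {P : MvPolynomial (Fin 3) F} {D n : ℕ} {e : F → ℕ} (hP : rayRestrict r P = 0)
    (hdeg : P.totalDegree ≤ D) (hD : D + 2 < p) (he : ∀ τ, e τ ≤ n)
    (hfirst : ∀ τ, (X - C τ) ^ e τ ∣ rayRestrict r (conicDeriv r.1 P))
    (hsecond : ∀ τ, (X - C τ) ^ e τ ∣ 2 * rayRestrict r (pderiv 0 P) +
      (X - C τ) * rayRestrict r (conicDeriv r.1 (conicDeriv r.1 P)))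
    (hsum : 2 * (D + 1) + n < ∑ τ, (e τ - 1)) (i : Fin 3) : rayRestrict r (pderiv i P) = 0 := by
  have hzero₀ : rayRestrict r (pderiv 0 P) = 0 :=
    rayRestrict_pderiv_zero_eq_zero hdeg hD he hsecond hsum
  have hzero₁ : rayRestrict r (pderiv 1 P) = 0 := by
    have hconic : rayRestrict r (conicDeriv r.1 P) = 0 := by
      refine eq_zero_of_forall_X_sub_C_pow_dvd (S := univ) (fun τ _ => hfirst τ) ?_
      have hle : (rayRestrict r (conicDeriv r.1 P)).natDegree ≤ D :=
        (natDegree_rayRestrict_le r _).trans ((totalDegree_conicDeriv_le r.1 P).trans hdeg)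
      have : ∑ τ, (e τ - 1) ≤ ∑ τ, e τ := sum_le_sum fun τ _ => Nat.sub_le _ _
      omega
    rwa [conicDeriv_apply, map_sub, map_smul, hzero₀, smul_zero, zero_sub, neg_eq_zero] at hconic
  have hzero₂ : rayRestrict r (pderiv 2 P) = 0 := by
    have hchain : derivative (rayRestrict r P) = 0 := by rw [hP, derivative_zero]
    rw [rayRestrict, derivative_aeval_mvPolynomial, Fin.sum_univ_three, ← rayRestrict, hzero₀,
      hzero₁, zero_mul, zero_mul, zero_add, zero_add] at hchain
    change _ * derivative X = 0 at hchain
    rwa [derivative_X, mul_one] at hchain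
  fin_cases i
  exacts [hzero₀, hzero₁, hzero₂]

/-- The point of the ray `r` with last coordinate `τ`. -/
def rayPoint (r : F × F × F) (τ : F) : F × F × F :=
  (r.2.1 - r.1 * r.2.2 + r.1 ^ 2 * τ, r.2.2 - r.1 * τ, τ)

theorem rayThrough_rayPoint (r : F × F × F) (τ : F) : rayThrough (rayPoint r τ) r.1 = r := by
  simp only [rayThrough, rayPoint]
  ext <;> ring

theorem rayPoint_of_rayThrough_eq {x r : F × F × F} (h : rayThrough x r.1 = r) :
    rayPoint r x.2.2 = x := by
  rw [← h]
  simp only [rayThrough, rayPoint]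
  ext <;> ring

variable [DecidableEq F]

/-- The rays of the family `L` passing through the point `x`; a ray `(m, a, b)` passes through `x`
exactly when it is the ray of slope `m` through `x`. -/
def raysThrough (L : Finset (F × F × F)) (x : F × F × F) : Finset (F × F × F) :=
  {r ∈ L | rayThrough x r.1 = r}

theorem pow_dvd_rayRestrict_conicDeriv {L : Finset (F × F × F)} {P : MvPolynomial (Fin 3) F}
    (hP : ∀ r ∈ L, rayRestrict r P = 0) (r : F × F × F) (τ : F) :
    (X - C τ) ^ (#(raysThrough L (rayPoint r τ)) / 2 - 1) ∣
      rayRestrict r (conicDeriv r.1 P) ∧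
    (X - C τ) ^ (#(raysThrough L (rayPoint r τ)) / 2 - 1) ∣
      2 * rayRestrict r (pderiv 0 P) +
        (X - C τ) * rayRestrict r (conicDeriv r.1 (conicDeriv r.1 P)) := by
  set x := rayPoint r τ
  set S := raysThrough L x
  have hcard : #(S.image Prod.fst) = #S := card_image_of_injOn fun r₁ h₁ r₂ h₂ h => by
    rw [← (mem_filter.mp h₁).2, ← (mem_filter.mp h₂).2, h]
  have hcone : C (X ^ (#S / 2)) ∣ coneRestrict x P := by
    rw [← hcard]
    refine C_X_pow_dvd_coneRestrict fun m hm => ?_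
    obtain ⟨r', hr', rfl⟩ := mem_image.mp hm
    rw [(mem_filter.mp hr').2]
    exact hP r' (mem_filter.mp hr').1
  rcases Nat.eq_zero_or_pos (#S / 2) with hk | hk
  · simp [hk]
  · have hlocal := X_sub_C_pow_dvd_rayRestrict_conicDeriv
      (k := #S / 2 - 1) (by rwa [Nat.sub_add_cancel hk]) r.1
    rwa [rayThrough_rayPoint] at hlocal

theorem eq_zero_of_forall_rayRestrict_eq_zero [Fintype F] {p : ℕ} [CharP F p]
    {L : Finset (F × F × F)} (hL : L.Nonempty) {D n : ℕ} (hD : D + 2 < p)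
    (hn : ∀ x, #(raysThrough L x) ≤ n)
    (hrich : ∀ r ∈ L, 2 * (D + 1) + n <
      ∑ τ, (#(raysThrough L (rayPoint r τ)) / 2 - 2))
    {P : MvPolynomial (Fin 3) F} (hdeg : P.totalDegree ≤ D)
    (hP : ∀ r ∈ L, rayRestrict r P = 0) : P = 0 := by
  have hpderiv : ∀ i, ∀ r ∈ L, rayRestrict r (pderiv i P) = 0 := fun i r hr =>
    rayRestrict_pderiv_eq_zero (hP r hr) hdeg hD
      (fun τ => (Nat.sub_le _ _).trans ((Nat.div_le_self _ _).trans (hn (rayPoint r τ))))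
      (fun τ => (pow_dvd_rayRestrict_conicDeriv hP r τ).1)
      (fun τ => (pow_dvd_rayRestrict_conicDeriv hP r τ).2)
      (by simpa only [Nat.sub_sub] using hrich r hr) i
  have hconst : P = MvPolynomial.C (P.coeff 0) := by
    rcases Nat.eq_zero_or_pos P.totalDegree with h0 | hpos
    · exact MvPolynomial.totalDegree_eq_zero_iff_eq_C.mp h0
    · refine eq_C_of_forall_pderiv_eq_zero (p := p) (fun i => ?_) (by omega)
      have hlt : (pderiv i P).totalDegree < P.totalDegree :=
        (totalDegree_pderiv_le i P).trans_lt (Nat.sub_lt hpos one_pos)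
      exact eq_zero_of_forall_rayRestrict_eq_zero hL hD hn hrich (hlt.le.trans hdeg) (hpderiv i)
  obtain ⟨r, hr⟩ := hL
  have hvalue := hP r hr
  rw [hconst, MvPolynomial.algHom_C, Polynomial.algebraMap_apply, C_eq_zero] at hvalue
  rw [hconst, show P.coeff 0 = 0 from hvalue, map_zero]
termination_by P.totalDegree

end Descent

section Incidences

theorem exists_nonempty_subset_forall_lt_of_mul_card_lt {β : Type*} [DecidableEq β]
    {Φ : Finset β → ℕ} {gain : Finset β → β → ℕ} (hempty : Φ ∅ = 0)
    (herase : ∀ L, ∀ r ∈ L, Φ L ≤ Φ (L.erase r) + gain L r) {T : ℕ} (L : Finset β)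
    (hL : T * #L < Φ L) : ∃ L' ⊆ L, L'.Nonempty ∧ ∀ r ∈ L', T < gain L' r := by
  induction L using Finset.strongInduction with
  | H L ih =>
    by_cases hgain : ∀ r ∈ L, T < gain L r
    · refine ⟨L, Subset.rfl, nonempty_iff_ne_empty.mpr ?_, hgain⟩
      rintro rfl
      simp [hempty] at hL
    · push Not at hgain
      obtain ⟨r, hr, hle⟩ := hgain
      have hrest : T * #(L.erase r) < Φ (L.erase r) := by
        have := herase L r hr
        rw [← card_erase_add_one hr, mul_add_one] at hL
        omega
      obtain ⟨L', hsub, hL'⟩ := ih _ (erase_ssubset hr) hrest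
      exact ⟨L', hsub.trans (erase_subset r L), hL'⟩

/-- The potential of a point lying on `k` rays. Its last increment `k / 2 - 2` is the contribution
of that point to the richness condition of `eq_zero_of_forall_rayRestrict_eq_zero`. -/
def pointPotential (k : ℕ) : ℕ := ∑ i ∈ range k, ((i + 1) / 2 - 2)

theorem pointPotential_succ (k : ℕ) :
    pointPotential (k + 1) = pointPotential k + ((k + 1) / 2 - 2) :=
  sum_range_succ _ k

theorem sq_le_four_mul_pointPotential_add (k : ℕ) : k ^ 2 ≤ 4 * pointPotential k + 9 * k := by
  induction k with
  | zero => exact zero_le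
  | succ k ih =>
    have : k ≤ 2 * ((k + 1) / 2 - 2) + 4 := by omega
    rw [pointPotential_succ]
    linarith

variable {F : Type*} [Field F] [DecidableEq F]

theorem pointPotential_raysThrough_erase {L : Finset (F × F × F)} {r : F × F × F} (hr : r ∈ L)
    (x : F × F × F) :
    pointPotential #(raysThrough L x) = pointPotential #(raysThrough (L.erase r) x) +
      if rayThrough x r.1 = r then #(raysThrough L x) / 2 - 2 else 0 := by
  have herase : raysThrough (L.erase r) x = (raysThrough L x).erase r := filter_erase _ _ _
  split_ifs with h
  · have hmem : r ∈ raysThrough L x := mem_filter.mpr ⟨hr, h⟩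
    rw [herase, ← card_erase_add_one hmem, pointPotential_succ]
  · have hmem : r ∉ raysThrough L x := fun hmem => h (mem_filter.mp hmem).2
    rw [herase, erase_eq_of_notMem hmem, add_zero]

variable [Fintype F]

theorem sum_filter_rayThrough_eq_sum_rayPoint {M : Type*} [AddCommMonoid M] (r : F × F × F)
    (g : F × F × F → M) :
    ∑ x with rayThrough x r.1 = r, g x = ∑ τ, g (rayPoint r τ) := by
  refine sum_nbij' (fun x => x.2.2) (rayPoint r) (fun _ _ => mem_univ _)
    (fun τ _ => mem_filter.mpr ⟨mem_univ _, rayThrough_rayPoint r τ⟩)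
    (fun x hx => rayPoint_of_rayThrough_eq (mem_filter.mp hx).2) (fun _ _ => rfl) fun x hx => ?_
  rw [rayPoint_of_rayThrough_eq (mem_filter.mp hx).2]

theorem sum_pointPotential_erase {L : Finset (F × F × F)} {r : F × F × F} (hr : r ∈ L) :
    ∑ x, pointPotential #(raysThrough L x) = ∑ x, pointPotential #(raysThrough (L.erase r) x) +
      ∑ τ, (#(raysThrough L (rayPoint r τ)) / 2 - 2) := by
  rw [← sum_filter_rayThrough_eq_sum_rayPoint r fun x => #(raysThrough L x) / 2 - 2, sum_filter,
    ← sum_add_distrib]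
  exact sum_congr rfl fun x _ => pointPotential_raysThrough_erase hr x

theorem sum_pointPotential_le {p : ℕ} [CharP F p] {L : Finset (F × F × F)} {n d : ℕ}
    (hn : ∀ x, #(raysThrough L x) ≤ n) (hd : 3 * #L < (d + 1) ^ 2) (hdp : 3 * d + 2 < p) :
    ∑ x, pointPotential #(raysThrough L x) ≤ (2 * (3 * d + 1) + n) * #L := by
  by_contra! hlt
  obtain ⟨L', hsub, hne, hrich⟩ := exists_nonempty_subset_forall_lt_of_mul_card_lt
    (by simp [raysThrough, pointPotential]) (fun L r hr => (sum_pointPotential_erase hr).le) L hlt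
  obtain ⟨P, hP0, hdeg, hP⟩ := exists_ne_zero_forall_rayRestrict_eq_zero hd
  refine hP0 (eq_zero_of_forall_rayRestrict_eq_zero hne hdp (fun x => ?_) hrich hdeg
    fun r hr => hP r (hsub hr))
  exact (card_le_card (filter_subset_filter _ hsub)).trans (hn x)

end Incidences

section FourthMoment

theorem card_filter_mul_left {F : Type*} [Field F] {Q : Finset F} {m : F} (hm : m ≠ 0)
    (hQ : ∀ x, m * x ∈ Q ↔ x ∈ Q) (P : F → Prop) [DecidablePred P] :
    #{x ∈ Q | P (m * x)} = #{x ∈ Q | P x} := by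
  refine card_bij' (fun x _ => m * x) (fun x _ => m⁻¹ * x) ?_ ?_ ?_ ?_
  · intro x hx
    simpa [hQ] using hx
  · intro x hx
    simpa [← hQ (m⁻¹ * x), hm] using hx
  · simp [hm]
  · simp [hm]

/-- The number of representations of `t` as a difference of two elements of `Q`. -/
def diffCount {A : Type*} [Add A] [DecidableEq A] (Q : Finset A) (t : A) : ℕ :=
  #{s ∈ Q | s + t ∈ Q}

theorem diffCount_le_card {A : Type*} [Add A] [DecidableEq A] (Q : Finset A) (t : A) :
    diffCount Q t ≤ #Q :=
  card_filter_le _ _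

theorem sum_mul_diffCount {A : Type*} [AddCommGroup A] [Fintype A] [DecidableEq A] (Q : Finset A)
    {R : Type*} [Semiring R] (φ : A → R) :
    ∑ t, φ t * diffCount Q t = ∑ x ∈ Q, ∑ y ∈ Q, φ (y - x) := by
  calc ∑ t, φ t * diffCount Q t = ∑ t, ∑ x ∈ Q, if x + t ∈ Q then φ t else 0 := by
        refine sum_congr rfl fun t _ => ?_
        rw [← sum_filter, sum_const, nsmul_eq_mul, Nat.cast_comm, diffCount]
    _ = ∑ x ∈ Q, ∑ t, if x + t ∈ Q then φ t else 0 := sum_comm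
    _ = ∑ x ∈ Q, ∑ y ∈ Q, φ (y - x) := by
        refine sum_congr rfl fun x _ => ?_
        rw [← sum_filter]
        exact sum_bij' (fun t _ => x + t) (fun y _ => y - x) (by simp) (by simp) (by simp)
          (by simp) (by simp)

theorem sum_diffCount {A : Type*} [AddCommGroup A] [Fintype A] [DecidableEq A] (Q : Finset A) :
    ∑ t, diffCount Q t = #Q ^ 2 := by
  simpa [sq] using sum_mul_diffCount Q fun _ => (1 : ℕ)

variable {F : Type*} [Field F] [DecidableEq F]

theorem card_raysThrough_product (G Q : Finset F) (x : F × F × F) :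
    #(raysThrough (G ×ˢ Q ×ˢ Q) x) =
      #{m ∈ G | x.1 + m * x.2.1 ∈ Q ∧ x.2.1 + m * x.2.2 ∈ Q} := by
  refine card_bij' (fun r _ => r.1) (fun m _ => rayThrough x m) (fun r hr => ?_) (fun m hm => ?_)
    (fun r hr => (mem_filter.mp hr).2) fun _ _ => rfl
  · obtain ⟨hmem, h⟩ := mem_filter.mp hr
    rw [← h] at hmem
    exact mem_filter.mpr (by simpa only [rayThrough, mem_product] using hmem)
  · exact mem_filter.mpr ⟨by simpa only [rayThrough, mem_product] using mem_filter.mp hm, rfl⟩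

theorem sum_card_raysThrough_product {G Q : Finset F} (hG : 0 ∉ G)
    (hQ : ∀ m ∈ G, ∀ x, m * x ∈ Q ↔ x ∈ Q) (t : F) :
    ∑ y ∈ Q ×ˢ Q, #(raysThrough (G ×ˢ Q ×ˢ Q) (y.1, t, y.2)) = #G * diffCount Q t ^ 2 := by
  have hslope : ∀ m ∈ G, #{y ∈ Q ×ˢ Q | y.1 + m * t ∈ Q ∧ t + m * y.2 ∈ Q} =
      diffCount Q t ^ 2 := fun m hm => by
    have hm0 : m ≠ 0 := ne_of_mem_of_not_mem hm hG
    have hfst : #{s ∈ Q | s + m * t ∈ Q} = diffCount Q t := by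
      simp only [← card_filter_mul_left hm0 (hQ m hm) fun s => s + m * t ∈ Q, ← mul_add, hQ m hm,
        diffCount]
    have hsnd : #{u ∈ Q | t + m * u ∈ Q} = diffCount Q t := by
      rw [card_filter_mul_left hm0 (hQ m hm) fun u => t + u ∈ Q]
      simp only [add_comm t, diffCount]
    rw [filter_product (fun s => s + m * t ∈ Q) fun u => t + m * u ∈ Q, card_product, hfst, hsnd,
      sq]
  simp only [card_raysThrough_product]
  calc _ = ∑ m ∈ G, #{y ∈ Q ×ˢ Q | y.1 + m * t ∈ Q ∧ t + m * y.2 ∈ Q} :=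
        sum_card_bipartiteAbove_eq_sum_card_bipartiteBelow
          fun (y : F × F) m => y.1 + m * t ∈ Q ∧ t + m * y.2 ∈ Q
    _ = #G * diffCount Q t ^ 2 := by rw [sum_congr rfl hslope, sum_const, smul_eq_mul]

variable [Fintype F]

theorem sq_card_mul_diffCount_pow_four_le {G Q : Finset F} (hG : 0 ∉ G)
    (hQ : ∀ m ∈ G, ∀ x, m * x ∈ Q ↔ x ∈ Q) (t : F) :
    #G ^ 2 * diffCount Q t ^ 4 ≤ #Q ^ 2 * (4 * ∑ y : F × F,
      pointPotential #(raysThrough (G ×ˢ Q ×ˢ Q) (y.1, t, y.2)) +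
        9 * (#G * #Q * diffCount Q t)) := by
  set ρ : F × F → ℕ := fun y => #(raysThrough (G ×ˢ Q ×ˢ Q) (y.1, t, y.2))
  have hfirst : ∑ y ∈ Q ×ˢ Q, ρ y = #G * diffCount Q t ^ 2 := sum_card_raysThrough_product hG hQ t
  have hdiff : #G * diffCount Q t ^ 2 ≤ #G * #Q * diffCount Q t := by
    rw [sq, ← mul_assoc, mul_assoc _ #Q, mul_comm #Q, ← mul_assoc]
    exact Nat.mul_le_mul_left _ (diffCount_le_card Q t)
  calc #G ^ 2 * diffCount Q t ^ 4 = (∑ y ∈ Q ×ˢ Q, ρ y) ^ 2 := by rw [hfirst]; ring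
    _ ≤ #(Q ×ˢ Q) * ∑ y ∈ Q ×ˢ Q, ρ y ^ 2 := sq_sum_le_card_mul_sum_sq
    _ ≤ #Q ^ 2 * ∑ y ∈ Q ×ˢ Q, (4 * pointPotential (ρ y) + 9 * ρ y) := by
        rw [card_product, ← sq]
        gcongr
        exact sq_le_four_mul_pointPotential_add _
    _ = #Q ^ 2 * (4 * ∑ y ∈ Q ×ˢ Q, pointPotential (ρ y) + 9 * (#G * diffCount Q t ^ 2)) := by
        rw [sum_add_distrib, ← mul_sum, ← mul_sum, hfirst]
    _ ≤ _ := by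
        gcongr
        exact subset_univ _

theorem card_mul_sum_diffCount_pow_four_le {p : ℕ} [CharP F p] {G Q : Finset F} (hG0 : 0 ∉ G)
    (hG : G.Nonempty) (hQ : ∀ m ∈ G, ∀ x, m * x ∈ Q ↔ x ∈ Q) {d : ℕ}
    (hd : 3 * (#G * #Q ^ 2) < (d + 1) ^ 2) (hdp : 3 * d + 2 < p) :
    #G * ∑ t, diffCount Q t ^ 4 ≤ #Q ^ 4 * (4 * (2 * (3 * d + 1) + #G) + 9 * #Q) := by
  have hcard : #(G ×ˢ Q ×ˢ Q) = #G * #Q ^ 2 := by rw [card_product, card_product, sq]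
  have hpotential : ∑ t, ∑ y : F × F, pointPotential #(raysThrough (G ×ˢ Q ×ˢ Q) (y.1, t, y.2)) ≤
      (2 * (3 * d + 1) + #G) * (#G * #Q ^ 2) := by
    rw [← hcard]
    refine le_trans (le_of_eq ?_) (sum_pointPotential_le (fun x => ?_) (by rwa [hcard]) hdp)
    · simp only [Fintype.sum_prod_type]
      exact sum_comm
    · rw [card_raysThrough_product]
      exact card_filter_le _ _
  refine Nat.le_of_mul_le_mul_left ?_ hG.card_pos
  calc #G * (#G * ∑ t, diffCount Q t ^ 4) = ∑ t, #G ^ 2 * diffCount Q t ^ 4 := by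
        rw [← mul_sum, sq, mul_assoc]
    _ ≤ ∑ t, #Q ^ 2 * (4 * ∑ y : F × F,
          pointPotential #(raysThrough (G ×ˢ Q ×ˢ Q) (y.1, t, y.2)) +
            9 * (#G * #Q * diffCount Q t)) :=
        sum_le_sum fun t _ => sq_card_mul_diffCount_pow_four_le hG0 hQ t
    _ ≤ #Q ^ 2 * (4 * ((2 * (3 * d + 1) + #G) * (#G * #Q ^ 2)) + 9 * (#G * #Q * #Q ^ 2)) := by
        rw [← mul_sum, sum_add_distrib, ← mul_sum, ← mul_sum, ← mul_sum, sum_diffCount]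
        gcongr
    _ = _ := by ring

theorem sum_diffCount_pow_four_le {p : ℕ} [CharP F p] {G Q : Finset F} (hG0 : 0 ∉ G)
    (hG : G.Nonempty) (hQ : ∀ m ∈ G, ∀ x, m * x ∈ Q ↔ x ∈ Q) (hGQ : √(#G : ℝ) ≤ #Q)
    (hp : 6 * √(#G : ℝ) * #Q + 2 < p) :
    ∑ t, (diffCount Q t : ℝ) ^ 4 ≤ 69 * (#Q : ℝ) ^ 5 / √(#G : ℝ) := by
  set b : ℝ := √(#G : ℝ)
  set q : ℝ := (#Q : ℝ)
  have hb : 1 ≤ b := Real.one_le_sqrt.mpr (Nat.one_le_cast.mpr hG.card_pos)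
  have hq : 0 ≤ q := Nat.cast_nonneg _
  have hbsq : (#G : ℝ) = b ^ 2 := (Real.sq_sqrt (Nat.cast_nonneg _)).symm
  set d := Nat.sqrt (3 * (#G * #Q ^ 2))
  have hd : (d : ℝ) ≤ 2 * (b * q) := by
    have hsq : ((d ^ 2 : ℕ) : ℝ) ≤ (3 * (#G * #Q ^ 2) : ℕ) := Nat.cast_le.mpr (Nat.sqrt_le' _)
    push_cast at hsq
    rw [hbsq] at hsq
    exact le_of_sq_le_sq (by nlinarith [sq_nonneg (b * q)])
      (mul_nonneg zero_le_two (mul_nonneg (zero_le_one.trans hb) hq))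
  have hdp : 3 * d + 2 < p := by
    have : (3 * d + 2 : ℝ) < p := by linarith
    exact_mod_cast this
  have hnat : ((#G * ∑ t, diffCount Q t ^ 4 : ℕ) : ℝ) ≤
      (#Q ^ 4 * (4 * (2 * (3 * d + 1) + #G) + 9 * #Q) : ℕ) :=
    Nat.cast_le.mpr (card_mul_sum_diffCount_pow_four_le hG0 hG hQ (Nat.lt_succ_sqrt' _) hdp)
  push_cast at hnat
  rw [hbsq] at hnat
  rw [le_div_iff₀ (zero_lt_one.trans_le hb)]
  refine le_of_mul_le_mul_left ?_ (zero_lt_one.trans_le hb)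
  calc b * ((∑ t, (diffCount Q t : ℝ) ^ 4) * b) = b ^ 2 * ∑ t, (diffCount Q t : ℝ) ^ 4 := by ring
    _ ≤ q ^ 4 * (4 * (2 * (3 * d + 1) + b ^ 2) + 9 * q) := hnat
    _ ≤ q ^ 4 * (69 * (b * q)) := by
        refine mul_le_mul_of_nonneg_left ?_ (pow_nonneg hq 4)
        nlinarith
    _ = b * (69 * q ^ 5) := by ring

end FourthMoment

section Correlation

variable {p : ℕ} [NeZero p]

theorem corr_sub (f : ZMod p → ℝ) (x y : ZMod p) :
    corr p f (y - x) = ∑ z, f (z + x) * f (z + y) := by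
  rw [corr, ← Equiv.sum_comp (Equiv.addRight x)]
  simp only [Equiv.coe_addRight, add_assoc, add_sub_cancel]

theorem l2norm_sq (f : ZMod p → ℝ) : l2norm p f ^ 2 = ∑ x, f x ^ 2 :=
  Real.sq_sqrt (sum_nonneg fun _ _ => sq_nonneg _)

theorem corr_zero (f : ZMod p → ℝ) : corr p f 0 = l2norm p f ^ 2 := by
  rw [l2norm_sq, corr]
  simp only [add_zero, sq]

theorem abs_corr_le (f : ZMod p → ℝ) (x : ZMod p) : |corr p f x| ≤ l2norm p f ^ 2 := by
  refine abs_le_of_sq_le_sq ?_ (sq_nonneg _)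
  have hshift : ∑ y, f (y + x) ^ 2 = ∑ y, f y ^ 2 := Equiv.sum_comp (Equiv.addRight x) (f · ^ 2)
  calc corr p f x ^ 2 ≤ (∑ y, f y ^ 2) * ∑ y, f (y + x) ^ 2 := sum_mul_sq_le_sq_mul_sq _ _ _
    _ = (l2norm p f ^ 2) ^ 2 := by rw [hshift, l2norm_sq, sq (∑ y, f y ^ 2)]

theorem sum_corr (f : ZMod p → ℝ) : ∑ x, corr p f x = (∑ x, f x) ^ 2 := by
  simp only [corr]
  rw [sum_comm, sq, sum_mul]
  refine sum_congr rfl fun y _ => ?_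
  rw [← mul_sum]
  exact congrArg (f y * ·) (Equiv.sum_comp (Equiv.addLeft y) f)

theorem sum_abs_corr_le (f : ZMod p → ℝ) : ∑ x, |corr p f x| ≤ l1norm p f ^ 2 := by
  rw [l1norm, ← sum_corr fun x => |f x|]
  refine sum_le_sum fun x _ => (abs_sum_le_sum_abs _ _).trans (le_of_eq ?_)
  simp only [abs_mul, corr]

theorem l1norm_nonneg (f : ZMod p → ℝ) : 0 ≤ l1norm p f :=
  sum_nonneg fun _ _ => abs_nonneg _

theorem l2norm_le_l1norm (f : ZMod p → ℝ) : l2norm p f ≤ l1norm p f := by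
  refine le_of_sq_le_sq ?_ (l1norm_nonneg f)
  calc l2norm p f ^ 2 = corr p f 0 := (corr_zero f).symm
    _ ≤ |corr p f 0| := le_abs_self _
    _ ≤ ∑ x, |corr p f x| :=
        single_le_sum (f := fun x => |corr p f x|) (fun _ _ => abs_nonneg _) (mem_univ _)
    _ ≤ l1norm p f ^ 2 := sum_abs_corr_le f

theorem l2norm_pos {f : ZMod p → ℝ} (hf : f ≠ 0) : 0 < l2norm p f := by
  obtain ⟨x, hx⟩ := Function.ne_iff.mp hf
  exact Real.sqrt_pos.mpr
    (sum_pos' (fun _ _ => sq_nonneg _) ⟨x, mem_univ _, sq_pos_of_ne_zero hx⟩)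

theorem corr_smul (c : ℝ) (f : ZMod p → ℝ) (x : ZMod p) :
    corr p (c • f) x = c ^ 2 * corr p f x := by
  simp only [corr, Pi.smul_apply, smul_eq_mul, mul_sum]
  exact sum_congr rfl fun y _ => by ring

theorem EplusF_smul (c : ℝ) (m : ℕ) (f : ZMod p → ℝ) :
    EplusF p m (c • f) = c ^ (2 * m) * EplusF p m f := by
  simp only [EplusF, corr_smul, mul_pow, mul_sum, pow_mul]

theorem l1norm_smul (c : ℝ) (f : ZMod p → ℝ) : l1norm p (c • f) = |c| * l1norm p f := by
  simp only [l1norm, Pi.smul_apply, smul_eq_mul, abs_mul, mul_sum]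

theorem l2norm_smul (c : ℝ) (f : ZMod p → ℝ) : l2norm p (c • f) = |c| * l2norm p f := by
  simp only [l2norm, Pi.smul_apply, smul_eq_mul, mul_pow, ← mul_sum]
  rw [Real.sqrt_mul (sq_nonneg c), Real.sqrt_sq_eq_abs]

theorem corr_mul_left {f : ZMod p → ℝ} {γ : ZMod p} (hγ : IsUnit γ) (hf : ∀ x, f (γ * x) = f x)
    (x : ZMod p) : corr p f (γ * x) = corr p f x := by
  obtain ⟨u, rfl⟩ := hγ
  rw [corr, ← Equiv.sum_comp u.mulLeft]
  simp only [Units.mulLeft_apply, ← mul_add, hf, corr]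

theorem sum_sum_mul_sum_mul {ι κ R : Type*} [CommSemiring R] (s : Finset ι) (t : Finset κ)
    (g : κ → ι → R) : ∑ x ∈ s, ∑ y ∈ s, ∑ z ∈ t, g z x * g z y = ∑ z ∈ t, (∑ x ∈ s, g z x) ^ 2 := by
  simp only [sq, sum_mul_sum]
  exact (sum_congr rfl fun x _ => sum_comm).trans sum_comm

-- Powers of a correlation are again of the form `∑ z, g z x * g z y`: take `z ∈ (ZMod p)^m`.
theorem sq_sum_corr_pow_le (f : ZMod p → ℝ) (m : ℕ) (Q : Finset (ZMod p)) :
    (∑ x ∈ Q, corr p f x ^ m) ^ 2 ≤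
      corr p f 0 ^ m * ∑ x ∈ Q, ∑ y ∈ Q, corr p f (y - x) ^ m := by
  let g : (Fin m → ZMod p) → ZMod p → ℝ := fun z x => ∏ i, f (z i + x)
  have hg : ∀ x y, corr p f (y - x) ^ m = ∑ z, g z x * g z y := fun x y => by
    rw [corr_sub, Fintype.sum_pow]
    exact sum_congr rfl fun z _ => prod_mul_distrib
  have hzero : corr p f 0 ^ m = ∑ z, g z 0 ^ 2 := by
    simpa only [sub_zero, sq] using hg 0 0
  have hlin : ∑ x ∈ Q, corr p f x ^ m = ∑ z, g z 0 * ∑ x ∈ Q, g z x := by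
    simp only [mul_sum]
    rw [sum_comm]
    exact sum_congr rfl fun x _ => by rw [← hg, sub_zero]
  rw [hlin, hzero]
  simp only [hg, sum_sum_mul_sum_mul]
  exact sum_mul_sq_le_sq_mul_sq _ _ _

theorem sum_corr_mul_corr_mul_left (f : ZMod p → ℝ) (l : ZMod p) :
    ∑ x, corr p f x * corr p f (l * x) = ∑ w, (∑ y, f y * f (w + l * y)) ^ 2 := by
  calc ∑ x, corr p f x * corr p f (l * x) = ∑ y, ∑ x, f y * f (y + x) * corr p f (l * x) := by
        rw [sum_comm]
        exact sum_congr rfl fun x _ => sum_mul _ _ _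
    _ = ∑ y, ∑ y', f y * f y' * corr p f (l * y' - l * y) := by
        refine sum_congr rfl fun y _ => ?_
        rw [← Equiv.sum_comp (Equiv.addLeft y) fun y' => f y * f y' * _]
        simp only [Equiv.coe_addLeft, ← mul_sub, add_sub_cancel_left]
    _ = ∑ y, ∑ y', ∑ w, f y * f (w + l * y) * (f y' * f (w + l * y')) := by
        simp only [corr_sub, mul_sum, mul_mul_mul_comm]
    _ = ∑ w, (∑ y, f y * f (w + l * y)) ^ 2 :=
        sum_sum_mul_sum_mul univ univ fun w y => f y * f (w + l * y)

end Correlation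

section InvariantCorrelation

variable {p : ℕ} [Fact p.Prime] {G : Finset (ZMod p)} {f : ZMod p → ℝ}

theorem card_mul_sum_corr_sq_le (hG : 0 ∉ G) (hf : ∀ γ ∈ G, ∀ x, f (γ * x) = f x)
    (hsum : ∑ x, f x = 0) : #G * ∑ x, corr p f x ^ 2 ≤ p * corr p f 0 ^ 2 := by
  have hdilate : ∀ x ≠ 0, ∑ l, corr p f (l * x) = 0 := fun x hx => by
    refine (Equiv.sum_comp (Equiv.mulRight₀ x hx) (corr p f)).trans ?_
    rw [sum_corr, hsum, zero_pow two_ne_zero]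
  have htotal : ∑ l, ∑ x, corr p f x * corr p f (l * x) = p * corr p f 0 ^ 2 := by
    rw [sum_comm, sum_eq_single_of_mem 0 (mem_univ _)
      fun x _ hx => by rw [← mul_sum, hdilate x hx, mul_zero]]
    simp only [mul_zero, sum_const, card_univ, ZMod.card, nsmul_eq_mul, sq]
  calc #G * ∑ x, corr p f x ^ 2 = ∑ l ∈ G, ∑ x, corr p f x * corr p f (l * x) := by
        rw [← nsmul_eq_mul, ← sum_const]
        refine sum_congr rfl fun l hl => sum_congr rfl fun x _ => ?_
        rw [corr_mul_left (ne_of_mem_of_not_mem hl hG).isUnit (hf l hl), sq]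
    _ ≤ ∑ l, ∑ x, corr p f x * corr p f (l * x) := by
        refine sum_le_sum_of_subset_of_nonneg (subset_univ _) fun l _ _ => ?_
        rw [sum_corr_mul_corr_mul_left]
        exact sum_nonneg fun _ _ => sq_nonneg _
    _ = p * corr p f 0 ^ 2 := htotal

theorem card_mul_abs_corr_le (hG : 0 ∉ G) (hf : ∀ γ ∈ G, ∀ x, f (γ * x) = f x) {x : ZMod p}
    (hx : x ≠ 0) : #G * |corr p f x| ≤ l1norm p f ^ 2 :=
  calc #G * |corr p f x| = ∑ l ∈ G, |corr p f (l * x)| := by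
        rw [← nsmul_eq_mul, ← sum_const]
        refine sum_congr rfl fun l hl => ?_
        rw [corr_mul_left (ne_of_mem_of_not_mem hl hG).isUnit (hf l hl)]
    _ = ∑ y ∈ G.image (· * x), |corr p f y| :=
        (sum_image (f := fun y => |corr p f y|) fun _ _ _ _ h => mul_right_cancel₀ hx h).symm
    _ ≤ ∑ y, |corr p f y| :=
        sum_le_sum_of_subset_of_nonneg (subset_univ _) fun _ _ _ => abs_nonneg _
    _ ≤ l1norm p f ^ 2 := sum_abs_corr_le f

end InvariantCorrelation

section LevelSets

theorem exists_dyadic_level_sum_le {ι : Type*} {s : Finset ι} {φ : ι → ℝ} {N : ℕ}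
    (hφ : ∀ x ∈ s, (1 / 2) ^ (N + 1) < φ x) (hφ1 : ∀ x ∈ s, φ x ≤ 1) (w : ι → ℝ) :
    ∃ j ≤ N, ∑ x ∈ s, w x ≤
      (N + 1) * ∑ x ∈ s with (1 / 2) ^ (j + 1) < φ x ∧ φ x ≤ (1 / 2) ^ j, w x := by
  have hlevel : ∀ x ∈ s, ∃ j : ℕ, (1 / 2) ^ (j + 1) < φ x ∧ φ x ≤ (1 / 2) ^ j := fun x hx =>
    exists_nat_pow_near_of_lt_one ((by positivity : (0 : ℝ) < (1 / 2) ^ (N + 1)).trans (hφ x hx))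
      (hφ1 x hx) (by norm_num) (by norm_num)
  have hlt : ∀ {i j : ℕ} {y : ℝ}, (1 / 2) ^ (i + 1) < y → y ≤ (1 / 2) ^ j → j < i + 1 :=
    fun hi hj => (pow_lt_pow_iff_right_of_lt_one₀ (by norm_num) (by norm_num)).mp (hi.trans_le hj)
  choose! level hlevel using hlevel
  obtain ⟨j, hj, hle⟩ := exists_le_sum_fiber_of_maps_to_of_nsmul_le_sum
    (s := s) (t := range (N + 1)) (f := level) (w := w) (b := (∑ x ∈ s, w x) / (N + 1))
    (fun x hx => mem_range.mpr (hlt (hφ x hx) (hlevel x hx).2)) nonempty_range_add_one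
    (by rw [card_range, nsmul_eq_mul, Nat.cast_add_one, mul_div_cancel₀ _ (by positivity)])
  refine ⟨j, Nat.lt_succ_iff.mp (mem_range.mp hj), ?_⟩
  have hfiber : {x ∈ s | level x = j} = {x ∈ s | (1 / 2) ^ (j + 1) < φ x ∧ φ x ≤ (1 / 2) ^ j} :=
    filter_congr fun x hx => ⟨fun h => h ▸ hlevel x hx, fun h => by
      have hle_level := hlt (hlevel x hx).1 h.2
      have hlevel_le := hlt h.1 (hlevel x hx).2
      omega⟩
  rwa [div_le_iff₀' (by positivity), hfiber] at hle

theorem exists_dyadic_level_sum_sq_le {ι : Type*} {s : Finset ι} {φ : ι → ℝ}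
    (hφ0 : ∀ x ∈ s, 0 ≤ φ x) (hφ1 : ∀ x ∈ s, φ x ≤ 1) {θ : ℝ} {N : ℕ} (hN : (1 / 2) ^ (N + 1) < θ)
    (hθ : θ ≤ (1 / 2) ^ N) (hsum : 2 * θ * ∑ x ∈ s, φ x ≤ ∑ x ∈ s, φ x ^ 2) :
    ∃ τ, θ ≤ τ ∧ ∑ x ∈ s, φ x ^ 2 ≤
      2 * (N + 1) * (τ ^ 2 * #{x ∈ s | τ / 2 < φ x ∧ φ x ≤ τ}) := by
  obtain ⟨j, hj, hle⟩ := exists_dyadic_level_sum_le (s := {x ∈ s | θ < φ x}) (N := N)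
    (fun x hx => hN.trans (mem_filter.mp hx).2) (fun x hx => hφ1 x (mem_filter.mp hx).1) (φ · ^ 2)
  have hsmall : ∑ x ∈ s with ¬θ < φ x, φ x ^ 2 ≤ θ * ∑ x ∈ s, φ x := by
    have hθ0 : 0 < θ := (by positivity : (0 : ℝ) < (1 / 2) ^ (N + 1)).trans hN
    calc ∑ x ∈ s with ¬θ < φ x, φ x ^ 2 ≤ ∑ x ∈ s with ¬θ < φ x, θ * φ x := by
          refine sum_le_sum fun x hx => ?_
          obtain ⟨hxs, hxθ⟩ := mem_filter.mp hx
          rw [sq]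
          exact mul_le_mul_of_nonneg_right (not_lt.mp hxθ) (hφ0 x hxs)
      _ ≤ ∑ x ∈ s, θ * φ x := sum_le_sum_of_subset_of_nonneg (filter_subset _ s)
          fun x hxs _ => mul_nonneg hθ0.le (hφ0 x hxs)
      _ = θ * ∑ x ∈ s, φ x := (mul_sum _ _ _).symm
  have hlarge : ∑ x ∈ s, φ x ^ 2 ≤ 2 * ∑ x ∈ s with θ < φ x, φ x ^ 2 := by
    have := sum_filter_add_sum_filter_not s (θ < φ ·) (φ · ^ 2)
    linarith
  set τ : ℝ := (1 / 2) ^ j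
  have hlevel : ∑ x ∈ {x ∈ s | θ < φ x} with (1 / 2) ^ (j + 1) < φ x ∧ φ x ≤ (1 / 2) ^ j,
      φ x ^ 2 ≤ τ ^ 2 * #{x ∈ s | τ / 2 < φ x ∧ φ x ≤ τ} := by
    rw [pow_succ, mul_one_div, mul_comm (τ ^ 2), ← nsmul_eq_mul, ← sum_const]
    refine (sum_le_sum fun x hx => ?_).trans (sum_le_sum_of_subset_of_nonneg
      (filter_subset_filter _ (filter_subset _ s)) fun _ _ _ => sq_nonneg τ)
    obtain ⟨hxs, -, hxτ⟩ := mem_filter.mp hx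
    exact pow_le_pow_left₀ (hφ0 x (mem_filter.mp hxs).1) hxτ 2
  refine ⟨τ, hθ.trans (pow_le_pow_of_le_one (by norm_num) (by norm_num) hj), ?_⟩
  calc ∑ x ∈ s, φ x ^ 2 ≤ 2 * ((N + 1) * _) := hlarge.trans (by gcongr)
    _ ≤ 2 * ((N + 1) * (τ ^ 2 * #{x ∈ s | τ / 2 < φ x ∧ φ x ≤ τ})) := by gcongr
    _ = _ := by ring

theorem sum_pow_eight_le_of_posDef {A : Type*} [AddCommGroup A] [Fintype A] [DecidableEq A]
    {φ : A → ℝ} (hφ : ∀ x, 0 ≤ φ x) {Q : Finset A}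
    (hpos : (∑ x ∈ Q, φ x) ^ 2 ≤ ∑ x ∈ Q, ∑ y ∈ Q, φ (y - x)) :
    (∑ x ∈ Q, φ x) ^ 8 ≤
      (∑ x, φ x) ^ 2 * (∑ x, φ x ^ 2) * ∑ t, (diffCount Q t : ℝ) ^ 4 := by
  have hfirst : (∑ t, φ t * diffCount Q t) ^ 2 ≤
      (∑ t, φ t) * ∑ t, φ t * (diffCount Q t : ℝ) ^ 2 :=
    sum_sq_le_sum_mul_sum_of_sq_le_mul _ (fun t _ => hφ t)
      (fun t _ => mul_nonneg (hφ t) (sq_nonneg _)) fun t _ => le_of_eq (by ring)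
  have hsecond : (∑ t, φ t * (diffCount Q t : ℝ) ^ 2) ^ 2 ≤
      (∑ t, φ t ^ 2) * ∑ t, (diffCount Q t : ℝ) ^ 4 :=
    sum_sq_le_sum_mul_sum_of_sq_le_mul _ (fun t _ => sq_nonneg _) (fun t _ => by positivity)
      fun t _ => le_of_eq (by ring)
  rw [← sum_mul_diffCount] at hpos
  calc (∑ x ∈ Q, φ x) ^ 8 = (((∑ x ∈ Q, φ x) ^ 2) ^ 2) ^ 2 := by ring
    _ ≤ ((∑ t, φ t * diffCount Q t) ^ 2) ^ 2 := by gcongr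
    _ ≤ ((∑ t, φ t) * ∑ t, φ t * (diffCount Q t : ℝ) ^ 2) ^ 2 := by gcongr
    _ ≤ (∑ t, φ t) ^ 2 * ((∑ t, φ t ^ 2) * ∑ t, (diffCount Q t : ℝ) ^ 4) := by
        rw [mul_pow]
        gcongr
    _ = _ := by ring

theorem add_one_le_three_mul_one_add_logb {Λ B : ℝ} {N : ℕ} (hB : 2 ≤ B) (hΛ : 1 ≤ Λ)
    (hBΛ : B ^ 7 ≤ 2 * Λ ^ 2) (hN : 2 ^ N ≤ 4 * B) : (N + 1 : ℝ) ≤ 3 * (1 + Real.logb 2 Λ) := by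
  have hBle : B ≤ Λ := by
    refine le_of_sq_le_sq ?_ (by linarith)
    have hB5 : (2 : ℝ) ^ 5 ≤ B ^ 5 := by gcongr
    nlinarith [mul_le_mul_of_nonneg_right hB5 (sq_nonneg B), sq_nonneg B]
  have hlog : Real.logb 2 (2 ^ N) ≤ Real.logb 2 (2 ^ 2 * Λ) :=
    Real.logb_le_logb_of_le one_lt_two (by positivity) (by linarith)
  rw [Real.logb_mul (by positivity) (by positivity), Real.logb_pow, Real.logb_pow,
    Real.logb_self_eq_one one_lt_two] at hlog
  have hlogΛ : 0 ≤ Real.logb 2 Λ := Real.logb_nonneg one_lt_two hΛ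
  push_cast at hlog
  linarith

theorem mul_le_of_level_bounds {E₁ E₂ B τ q J L : ℝ} (hE₁ : 0 ≤ E₁) (hE₂ : 0 < E₂) (hB : 0 < B)
    (hq : 0 < q) (hJ : 0 ≤ J) (hL : 1 ≤ L) (hJL : J ≤ 3 * L)
    (hE₂τ : E₂ ≤ 4 * τ * E₁) (hE₂q : E₂ ≤ 4 * J * τ ^ 2 * q)
    (hmoment : (τ / 2 * q) ^ 8 ≤ E₁ ^ 2 * E₂ * (69 * q ^ 5 / B ^ 4)) :
    E₂ * B ≤ 160 * L * E₁ := by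
  have hlevel : τ ^ 8 * q ^ 3 * B ^ 4 ≤ 2 ^ 8 * 69 * (E₁ ^ 2 * E₂) := by
    rw [← mul_div_assoc, le_div_iff₀ (by positivity)] at hmoment
    refine le_of_mul_le_mul_right ?_ (by positivity : 0 < q ^ 5)
    linear_combination 2 ^ 8 * hmoment
  have hJ3 : J ^ 3 ≤ 27 * L ^ 4 :=
    calc J ^ 3 ≤ (3 * L) ^ 3 := by gcongr
      _ = 27 * L ^ 3 := by ring
      _ ≤ 27 * L ^ 4 := by gcongr; norm_num
  have hfifth : E₂ * (E₂ * B) ^ 4 ≤ E₂ * (160 * L * E₁) ^ 4 :=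
    calc E₂ * (E₂ * B) ^ 4 = E₂ ^ 3 * E₂ ^ 2 * B ^ 4 := by ring
      _ ≤ (4 * J * τ ^ 2 * q) ^ 3 * (4 * τ * E₁) ^ 2 * B ^ 4 := by gcongr
      _ = 2 ^ 10 * J ^ 3 * E₁ ^ 2 * (τ ^ 8 * q ^ 3 * B ^ 4) := by ring
      _ ≤ 2 ^ 10 * (27 * L ^ 4) * E₁ ^ 2 * (2 ^ 8 * 69 * (E₁ ^ 2 * E₂)) := by gcongr
      _ = 2 ^ 18 * 69 * 27 * (E₂ * L ^ 4 * E₁ ^ 4) := by ring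
      _ ≤ 160 ^ 4 * (E₂ * L ^ 4 * E₁ ^ 4) := by gcongr; norm_num
      _ = E₂ * (160 * L * E₁) ^ 4 := by ring
  exact le_of_pow_le_pow_left₀ four_ne_zero (by positivity) (le_of_mul_le_mul_left hfifth hE₂)

end LevelSets

section UnitNorm

variable {p : ℕ} [Fact p.Prime] {f : ZMod p → ℝ} {G : Finset (ZMod p)} {m : ℕ}

theorem EplusF_two_mul (m : ℕ) (f : ZMod p → ℝ) :
    EplusF p (2 * m) f = ∑ x, (corr p f x ^ m) ^ 2 := by
  simp only [EplusF, ← pow_mul, mul_comm]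

theorem sum_erase_zero_sq_corr_pow (hunit : l2norm p f = 1) (m : ℕ) :
    ∑ x ∈ univ.erase 0, (corr p f x ^ m) ^ 2 = EplusF p (2 * m) f - 1 := by
  rw [EplusF_two_mul, ← sum_erase_add _ _ (mem_univ 0), corr_zero, hunit]
  simp only [one_pow, add_sub_cancel_right]

theorem corr_pow_le_abs_corr_pow (hunit : l2norm p f = 1) {n : ℕ} (hnm : n ≤ m) (x : ZMod p) :
    corr p f x ^ m ≤ |corr p f x| ^ n := by
  have habs : |corr p f x| ≤ 1 := by simpa only [hunit, one_pow] using abs_corr_le f x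
  exact (le_abs_self _).trans
    (abs_pow (corr p f x) m ▸ pow_le_pow_of_le_one (abs_nonneg _) habs hnm)

theorem corr_pow_le_one (hunit : l2norm p f = 1) (m : ℕ) (x : ZMod p) : corr p f x ^ m ≤ 1 := by
  simpa only [pow_zero] using corr_pow_le_abs_corr_pow hunit m.zero_le x

theorem EplusF_two_mul_le (hunit : l2norm p f = 1) (hm : Even m) :
    EplusF p (2 * m) f ≤ EplusF p m f := by
  rw [EplusF_two_mul, EplusF]
  exact sum_le_sum fun x _ => pow_le_of_le_one (hm.pow_nonneg _) (corr_pow_le_one hunit m x)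
    two_ne_zero

theorem card_mul_EplusF_two_mul_sub_one_le (hunit : l2norm p f = 1) (hG : 0 ∉ G)
    (hf : ∀ γ ∈ G, ∀ x, f (γ * x) = f x) (hm : Even m) (hm0 : m ≠ 0) :
    #G * (EplusF p (2 * m) f - 1) ≤ l1norm p f ^ 2 * EplusF p m f := by
  rw [← sum_erase_zero_sq_corr_pow hunit, mul_sum]
  calc ∑ x ∈ univ.erase 0, #G * (corr p f x ^ m) ^ 2
      ≤ ∑ x ∈ univ.erase 0, l1norm p f ^ 2 * corr p f x ^ m := by
        refine sum_le_sum fun x hx => ?_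
        rw [sq (corr p f x ^ m), ← mul_assoc]
        refine mul_le_mul_of_nonneg_right ?_ (hm.pow_nonneg _)
        refine le_trans ?_ (card_mul_abs_corr_le hG hf (ne_of_mem_erase hx))
        gcongr
        simpa only [pow_one] using
          corr_pow_le_abs_corr_pow hunit (Nat.one_le_iff_ne_zero.mpr hm0) x
    _ ≤ ∑ x, l1norm p f ^ 2 * corr p f x ^ m :=
        sum_le_sum_of_subset_of_nonneg (erase_subset _ _)
          fun x _ _ => mul_nonneg (sq_nonneg _) (hm.pow_nonneg _)
    _ = l1norm p f ^ 2 * EplusF p m f := (mul_sum _ _ _).symm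

theorem card_mul_card_mul_le_of_forall_le_corr_sq (hunit : l2norm p f = 1) (hG : 0 ∉ G)
    (hf : ∀ γ ∈ G, ∀ x, f (γ * x) = f x) (hsum : ∑ x, f x = 0) {Q : Finset (ZMod p)} {δ : ℝ}
    (hQ : ∀ x ∈ Q, δ ≤ corr p f x ^ 2) : #G * (#Q * δ) ≤ p :=
  calc #G * (#Q * δ) ≤ #G * ∑ x ∈ Q, corr p f x ^ 2 := by
        gcongr
        simpa only [nsmul_eq_mul] using card_nsmul_le_sum Q _ δ hQ
    _ ≤ #G * ∑ x, corr p f x ^ 2 := by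
        gcongr
        exact subset_univ Q
    _ ≤ p * corr p f 0 ^ 2 := card_mul_sum_corr_sq_le hG hf hsum
    _ = p := by rw [corr_zero, hunit, one_pow, one_pow, mul_one]

theorem card_le_card_of_forall_mul_mem {F : Type*} [MulZeroClass F] [IsRightCancelMulZero F]
    {G Q : Finset F} (hQ : ∀ γ ∈ G, ∀ x ∈ Q, γ * x ∈ Q) {x : F} (hx : x ∈ Q) (hx0 : x ≠ 0) :
    #G ≤ #Q :=
  card_le_card_of_injOn (· * x) (fun γ hγ => hQ γ hγ x hx) fun _ _ _ _ h => mul_right_cancel₀ hx0 h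

theorem six_mul_pow_four_mul_card_add_two_lt (hunit : l2norm p f = 1) (hG : 0 ∉ G)
    (hf : ∀ γ ∈ G, ∀ x, f (γ * x) = f x) (hsum : ∑ x, f x = 0) {Q : Finset (ZMod p)}
    (hQ : Q.Nonempty) {τ B : ℝ} (hτ : ∀ x ∈ Q, τ ≤ corr p f x ^ 2) (hB : 8 ≤ B)
    (hBG : B ^ 8 = #G) (hBτ : 1 ≤ 8 * B * τ) : 6 * B ^ 4 * #Q + 2 < p := by
  have hcardQ : (1 : ℝ) ≤ #Q := Nat.one_le_cast.mpr hQ.card_pos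
  have hB3 : (8 : ℝ) ^ 3 ≤ B ^ 3 := by gcongr
  have hlarge : 64 * (B ^ 4 * #Q) ≤ p :=
    calc 64 * (B ^ 4 * #Q) = 8 ^ 3 * (B ^ 4 * #Q) / 8 := by ring
      _ ≤ B ^ 3 * (B ^ 4 * #Q) * (8 * B * τ) / 8 := by
          rw [div_le_div_iff_of_pos_right (by norm_num)]
          exact (mul_le_mul_of_nonneg_right hB3 (by positivity)).trans
            (le_mul_of_one_le_right (by positivity) hBτ)
      _ = #G * (#Q * τ) := by rw [← hBG]; ring
      _ ≤ p := card_mul_card_mul_le_of_forall_le_corr_sq hunit hG hf hsum hτ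
  have hone : 1 ≤ B ^ 4 * #Q := one_le_mul_of_one_le_of_one_le (one_le_pow₀ (by linarith)) hcardQ
  linarith

theorem pow_eight_le_of_forall_le_corr_pow (hunit : l2norm p f = 1) (hG : 0 ∉ G)
    (hf : ∀ γ ∈ G, ∀ x, f (γ * x) = f x) (hsum : ∑ x, f x = 0) (hm : Even m) (hm0 : m ≠ 0)
    {Q : Finset (ZMod p)} (hQG : ∀ γ ∈ G, ∀ x, γ * x ∈ Q ↔ x ∈ Q) (hQ : Q.Nonempty) (hQ0 : 0 ∉ Q)
    {τ B : ℝ} (hτ : ∀ x ∈ Q, τ ≤ corr p f x ^ m) (hB : 8 ≤ B) (hBG : B ^ 8 = #G)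
    (hBτ : 1 ≤ 8 * B * τ) :
    (τ * #Q) ^ 8 ≤ EplusF p m f ^ 2 * EplusF p (2 * m) f * (69 * #Q ^ 5 / B ^ 4) := by
  obtain ⟨x, hx⟩ := hQ
  have hcardG : 0 < #G := Nat.cast_pos.mp (hBG ▸ by positivity : (0 : ℝ) < #G)
  have hτ0 : 0 < τ := pos_of_mul_pos_right (by linarith) (by positivity : 0 ≤ 8 * B)
  have hsqrt : √(#G : ℝ) = B ^ 4 := by
    rw [← hBG, (by ring : B ^ 8 = (B ^ 4) ^ 2), Real.sqrt_sq (by positivity)]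
  have hm2 : 2 ≤ m := Nat.le_of_dvd (Nat.pos_of_ne_zero hm0) hm.two_dvd
  have hsq : ∀ x ∈ Q, τ ≤ corr p f x ^ 2 := fun x hx =>
    (hτ x hx).trans ((corr_pow_le_abs_corr_pow hunit hm2 x).trans_eq (sq_abs _))
  have hGQ : √(#G : ℝ) ≤ #Q :=
    (Real.sqrt_le_self_iff.mpr (Or.inr (Nat.one_le_cast.mpr hcardG))).trans
      (Nat.cast_le.mpr (card_le_card_of_forall_mul_mem
        (fun γ hγ y hy => (hQG γ hγ y).mpr hy) hx (ne_of_mem_of_not_mem hx hQ0)))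
  have hp : 6 * √(#G : ℝ) * #Q + 2 < p :=
    hsqrt ▸ six_mul_pow_four_mul_card_add_two_lt hunit hG hf hsum ⟨x, hx⟩ hsq hB hBG hBτ
  have hpos : (∑ x ∈ Q, corr p f x ^ m) ^ 2 ≤ ∑ x ∈ Q, ∑ y ∈ Q, corr p f (y - x) ^ m := by
    simpa only [corr_zero, hunit, one_pow, one_mul] using sq_sum_corr_pow_le f m Q
  have hmoment := sum_diffCount_pow_four_le hG (card_pos.mp hcardG) hQG hGQ hp
  calc (τ * #Q) ^ 8 ≤ (∑ x ∈ Q, corr p f x ^ m) ^ 8 := by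
        gcongr
        simpa only [nsmul_eq_mul, mul_comm] using card_nsmul_le_sum Q _ τ hτ
    _ ≤ EplusF p m f ^ 2 * EplusF p (2 * m) f * ∑ t, (diffCount Q t : ℝ) ^ 4 := by
        rw [EplusF_two_mul]
        exact sum_pow_eight_le_of_posDef (fun _ => hm.pow_nonneg _) hpos
    _ ≤ EplusF p m f ^ 2 * EplusF p (2 * m) f * (69 * #Q ^ 5 / B ^ 4) := by
        rw [← hsqrt]
        gcongr
        rw [EplusF_two_mul]
        positivity

theorem exists_level_set_of_two_lt_EplusF (hunit : l2norm p f = 1) (hm : Even m)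
    (hE : 2 < EplusF p (2 * m) f) :
    ∃ (N : ℕ) (τ : ℝ), 2 ^ N * EplusF p (2 * m) f ≤ 4 * EplusF p m f ∧
      EplusF p (2 * m) f ≤ 4 * τ * EplusF p m f ∧
      EplusF p (2 * m) f ≤ 4 * (N + 1) * τ ^ 2 *
        #{x ∈ univ.erase 0 | τ / 2 < corr p f x ^ m ∧ corr p f x ^ m ≤ τ} := by
  have hEE := EplusF_two_mul_le hunit hm
  set E₁ := EplusF p m f
  set E₂ := EplusF p (2 * m) f
  have hE₁ : 0 < E₁ := by linarith
  have hE₂ : 0 < E₂ := by linarith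
  obtain ⟨N, hN, hθ⟩ := exists_nat_pow_near_of_lt_one (x := E₂ / (4 * E₁)) (y := 1 / 2)
    (div_pos hE₂ (by positivity)) (div_le_one_of_le₀ (by linarith) (by positivity)) (by norm_num)
    (by norm_num)
  have hsumE₁ : ∑ x ∈ univ.erase 0, corr p f x ^ m ≤ E₁ :=
    sum_le_sum_of_subset_of_nonneg (erase_subset _ _) fun _ _ _ => hm.pow_nonneg _
  have hsumE₂ : ∑ x ∈ univ.erase 0, (corr p f x ^ m) ^ 2 = E₂ - 1 :=
    sum_erase_zero_sq_corr_pow hunit m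
  obtain ⟨τ, hτ, hle⟩ := exists_dyadic_level_sum_sq_le (s := univ.erase (0 : ZMod p))
    (φ := fun x => corr p f x ^ m) (fun _ _ => hm.pow_nonneg _)
    (fun x _ => corr_pow_le_one hunit m x) hN hθ <|
    calc 2 * (E₂ / (4 * E₁)) * ∑ x ∈ univ.erase 0, corr p f x ^ m
        ≤ 2 * (E₂ / (4 * E₁)) * E₁ := by gcongr
      _ = E₂ / 2 := by field_simp; ring
      _ ≤ ∑ x ∈ univ.erase 0, (corr p f x ^ m) ^ 2 := by linarith
  refine ⟨N, τ, ?_, ?_, by linarith⟩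
  · rwa [div_le_iff₀ (by positivity), one_div_pow, one_div_mul_eq_div, le_div_iff₀' (by positivity)]
      at hθ
  · rw [div_le_iff₀ (by positivity)] at hτ
    linarith

theorem EplusF_two_mul_mul_le_of_lt (hunit : l2norm p f = 1) (hG : 0 ∉ G)
    (hf : ∀ γ ∈ G, ∀ x, f (γ * x) = f x) (hsum : ∑ x, f x = 0) (hm : Even m) (hm0 : m ≠ 0)
    {B : ℝ} (hB : 8 ≤ B) (hBG : B ^ 8 = #G) (hE : 2 < EplusF p (2 * m) f)
    (hEB : EplusF p m f < EplusF p (2 * m) f * B) :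
    EplusF p (2 * m) f * B ≤ 160 * (1 + Real.logb 2 (l1norm p f)) * EplusF p m f := by
  have hΛ : 1 ≤ l1norm p f := hunit ▸ l2norm_le_l1norm f
  have hEE := EplusF_two_mul_le hunit hm
  have hcard := card_mul_EplusF_two_mul_sub_one_le hunit hG hf hm hm0
  obtain ⟨N, τ, hN, hτ, hlevel⟩ := exists_level_set_of_two_lt_EplusF hunit hm hE
  set Q : Finset (ZMod p) := {x ∈ univ.erase 0 | τ / 2 < corr p f x ^ m ∧ corr p f x ^ m ≤ τ}
  have hQG : ∀ γ ∈ G, ∀ x, γ * x ∈ Q ↔ x ∈ Q := fun γ hγ x => by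
    have hγ0 : γ ≠ 0 := ne_of_mem_of_not_mem hγ hG
    simp only [Q, mem_filter, mem_erase, mem_univ, and_true, ne_eq, mul_eq_zero, hγ0, false_or,
      corr_mul_left hγ0.isUnit (hf γ hγ)]
  have hQ : Q.Nonempty := nonempty_iff_ne_empty.mpr fun hempty => by
    rw [hempty, card_empty, Nat.cast_zero, mul_zero] at hlevel
    linarith
  have hQ0 : 0 ∉ Q := fun h => notMem_erase 0 univ (mem_filter.mp h).1
  set E₁ := EplusF p m f
  set E₂ := EplusF p (2 * m) f
  have hE₂ : 0 < E₂ := by linarith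
  have hB7 : B ^ 7 ≤ 2 * l1norm p f ^ 2 := by
    refine le_of_mul_le_mul_right ?_ (by positivity : 0 < E₂ * B)
    calc B ^ 7 * (E₂ * B) = #G * E₂ := by rw [← hBG]; ring
      _ ≤ #G * (2 * (E₂ - 1)) := by gcongr; linarith
      _ ≤ 2 * (l1norm p f ^ 2 * E₁) := by linarith
      _ ≤ 2 * l1norm p f ^ 2 * (E₂ * B) := by rw [mul_assoc]; gcongr
  have hN' : 2 ^ N ≤ 4 * B := le_of_mul_le_mul_right (by linarith) hE₂
  have hτ0 : 0 < τ := by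
    by_contra! h
    linarith [mul_nonpos_of_nonpos_of_nonneg h (by linarith : 0 ≤ E₁)]
  have hBτ : 1 ≤ 8 * B * (τ / 2) := le_of_mul_le_mul_right
    (by linarith [mul_le_mul_of_nonneg_left hEB.le hτ0.le]) hE₂
  have hmoment := pow_eight_le_of_forall_le_corr_pow hunit hG hf hsum hm hm0 hQG hQ hQ0
    (fun x hx => (mem_filter.mp hx).2.1.le) hB hBG hBτ
  exact mul_le_of_level_bounds (by linarith) hE₂ (by linarith) (by exact_mod_cast hQ.card_pos)
    (by positivity) (le_add_of_nonneg_right (Real.logb_nonneg one_lt_two hΛ))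
    (add_one_le_three_mul_one_add_logb (by linarith) hΛ hB7 hN') hτ hlevel hmoment

theorem EplusF_two_mul_mul_le_of_l2norm_eq_one (hunit : l2norm p f = 1) (hG : 0 ∉ G)
    (hf : ∀ γ ∈ G, ∀ x, f (γ * x) = f x) (hsum : ∑ x, f x = 0) (hm : Even m) (hm0 : m ≠ 0)
    {B : ℝ} (hBG : B ^ 8 = #G) (hE : 2 < EplusF p (2 * m) f) :
    EplusF p (2 * m) f * B ≤ 160 * (1 + Real.logb 2 (l1norm p f)) * EplusF p m f := by
  have hΛ : 1 ≤ l1norm p f := hunit ▸ l2norm_le_l1norm f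
  have hE₁ : 0 ≤ EplusF p m f := sum_nonneg fun _ _ => hm.pow_nonneg _
  have hlog : 160 * EplusF p m f ≤ 160 * (1 + Real.logb 2 (l1norm p f)) * EplusF p m f := by
    have hlogΛ := mul_nonneg (Real.logb_nonneg one_lt_two hΛ) hE₁
    linarith
  rcases lt_or_ge (EplusF p m f) (EplusF p (2 * m) f * B) with hEB | hEB
  · rcases le_total 8 B with hB | hB
    · exact EplusF_two_mul_mul_le_of_lt hunit hG hf hsum hm hm0 hB hBG hE hEB
    · nlinarith [EplusF_two_mul_le hunit hm]
  · linarith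

theorem EplusF_two_mul_le_or_le_two_of_l2norm_eq_one (hunit : l2norm p f = 1)
    (H : Subgroup (ZMod p)ˣ) (hf : ∀ γ ∈ H, ∀ x : ZMod p, f (γ * x) = f x) (hsum : ∑ x, f x = 0)
    (hm : Even m) (hm0 : m ≠ 0) :
    EplusF p (2 * m) f ≤ 160 * (1 + Real.logb 2 (l1norm p f)) * EplusF p m f *
        (Nat.card H : ℝ) ^ (-(1 / 8) : ℝ) ∨
      EplusF p (2 * m) f ≤ 2 := by
  classical
  refine or_iff_not_imp_right.mpr fun hE => ?_
  let G : Finset (ZMod p) := (H : Set (ZMod p)ˣ).toFinset.map ⟨Units.val, Units.val_injective⟩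
  have hmem : ∀ γ ∈ G, ∃ u ∈ H, (u : ZMod p) = γ := fun γ hγ => by
    simpa only [G, mem_map, Set.mem_toFinset, SetLike.mem_coe, Function.Embedding.coeFn_mk] using hγ
  have hG : 0 ∉ G := fun h => by
    obtain ⟨u, -, hu⟩ := hmem 0 h
    exact u.ne_zero hu
  have hfG : ∀ γ ∈ G, ∀ x, f (γ * x) = f x := fun γ hγ => by
    obtain ⟨u, huH, rfl⟩ := hmem γ hγ
    exact hf u huH
  have hcard : #G = Nat.card H := by
    rw [card_map, Set.toFinset_card, ← Nat.card_eq_fintype_card, SetLike.coe_sort_coe]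
  have hroot : ((Nat.card H : ℝ) ^ (1 / 8 : ℝ)) ^ 8 = #G := by
    rw [hcard, ← Real.rpow_mul_natCast (Nat.cast_nonneg _)]
    norm_num
  rw [Real.rpow_neg (Nat.cast_nonneg _), ← div_eq_mul_inv,
    le_div_iff₀ (Real.rpow_pos_of_pos (Nat.cast_pos.mpr Nat.card_pos) _)]
  exact EplusF_two_mul_mul_le_of_l2norm_eq_one hunit hG hfG hsum hm hm0 hroot (not_le.mp hE)

end UnitNorm

theorem stmt3_general {p : ℕ} [Fact p.Prime] (H : Subgroup (ZMod p)ˣ) {f : ZMod p → ℝ}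
    (hf : ∀ γ ∈ H, ∀ x : ZMod p, f (γ * x) = f x) (hf0 : f ≠ 0) (hsum : ∑ x, f x = 0) {m : ℕ}
    (hm : Even m) (hm0 : m ≠ 0) :
    EplusF p (2 * m) f ≤ 160 * (1 + Real.logb 2 (l1norm p f / l2norm p f)) *
        l2norm p f ^ (2 * m) * EplusF p m f * (Nat.card H : ℝ) ^ (-(1 / 8) : ℝ) ∨
      EplusF p (2 * m) f ≤ 2 * l2norm p f ^ (4 * m) := by
  have hν : 0 < l2norm p f := l2norm_pos hf0
  set ν := l2norm p f
  have hunit : l2norm p (ν⁻¹ • f) = 1 := by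
    rw [l2norm_smul, abs_of_pos (inv_pos.mpr hν), inv_mul_cancel₀ hν.ne']
  have hsum' : ∑ x, (ν⁻¹ • f) x = 0 := by
    simp only [Pi.smul_apply, smul_eq_mul, ← mul_sum, hsum, mul_zero]
  have hf' : ∀ γ ∈ H, ∀ x : ZMod p, (ν⁻¹ • f) (γ * x) = (ν⁻¹ • f) x := fun γ hγ x => by
    rw [Pi.smul_apply, Pi.smul_apply, hf γ hγ x]
  refine (EplusF_two_mul_le_or_le_two_of_l2norm_eq_one hunit H hf' hsum' hm hm0).imp
    (fun h => ?_) fun h => ?_ <;>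
  rw [EplusF_smul, inv_pow, inv_mul_le_iff₀ (by positivity)] at h
  · rw [l1norm_smul, abs_of_pos (inv_pos.mpr hν), inv_mul_eq_div, EplusF_smul] at h
    have hpow : ν ^ (2 * (2 * m)) * ν⁻¹ ^ (2 * m) = ν ^ (2 * m) := by
      rw [two_mul (2 * m), pow_add, mul_assoc, ← mul_pow, mul_inv_cancel₀ hν.ne', one_pow, mul_one]
    refine h.trans_eq ?_
    rw [← hpow]
    ring
  · rwa [(by ring : 2 * (2 * m) = 4 * m), mul_comm (ν ^ (4 * m))] at h

theorem stmt3 :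
    ∃ C : ℝ, 1 ≤ C ∧
      ∀ (p : ℕ) [Fact p.Prime], Odd p →
        ∀ H : Subgroup (ZMod p)ˣ,
          ∀ f : ZMod p → ℝ,
            (∀ γ ∈ H, ∀ x : ZMod p, f ((γ : ZMod p) * x) = f x) →
            f ≠ 0 →
            (∑ x, f x) = 0 →
            ∀ k : ℕ, 2 ≤ k →
              EplusF p (2 ^ (k + 1)) f ≤
                  C * (1 + Real.logb 2 (l1norm p f / l2norm p f)) *
                    (l2norm p f) ^ (2 ^ (k + 1)) * EplusF p (2 ^ k) f *
                      (Nat.card H : ℝ) ^ (-(1 / 8) : ℝ) ∨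
                EplusF p (2 ^ (k + 1)) f ≤ 2 * (l2norm p f) ^ (2 ^ (k + 2)) := by
  refine ⟨160, by norm_num, fun p _ _ H f hf hf0 hsum k hk => ?_⟩
  rw [pow_succ' 2 k, (by ring : 2 ^ (k + 2) = 4 * 2 ^ k)]
  exact stmt3_general H hf hf0 hsum (even_two.pow_of_ne_zero (by omega)) (by positivity)
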